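/- arXiv:math/0311173 — 6 statements merged into one kernel-verified Lean document; each statement's English description precedes it below -/
import Mathlib

section
/- Let α: π → SU(3) be a nontrivial reducible homomorphism with α(h) = I. Then α is a limit of irreducible representations: for every ε > 0 there exists an irreducible homomorphism β: π → SU(3) such that ‖β(g) − α(g)‖ < ε for each generator g ∈ {x, y, z, h}. -/
/-!
Since `α(h) = 1`, the matrices `X = α(x)`, `Y = α(y)` satisfy `X^p = Y^q = (XY)^r = 1`, and any such
pair defines a representation. As `p, q, r` are pairwise coprime, commuting solutions of these
relations are trivial (`eq_one_of_coprime`). In particular the action on an invariant line is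
trivial, so a reducible representation killing `h`, which has an invariant line by taking an
orthogonal complement if necessary, has a common fixed vector (`exists_fixed`). It thus suffices to
move `Y` slightly within its conjugacy class, keeping `XY` in its conjugacy class, to a `Y'` such
that `X` and `Y'` have no common fixed vector.

Choose coordinates in which the fixed vector is `e₃`, so that `X, Y ∈ SU(2) ⊕ 1` (`block_form`); they
do not commute because `α` is nontrivial. A half-turn `U` about the axis perpendicular to those of
`X` and `Y` gives `X = U V`, `Y = W U` with Hermitian involutions `U, V, W`, of the form `2uu* - 1`,
`2vv* - 1`, `2ww* - 1` for unit vectors `u, v, w ∈ ℂ² ⊕ 0`, and noncommutativity says that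
`⟨u, v⟩⟨v, w⟩⟨w, u⟩` is not real (`factor`). Now `X` depends only on `u, v`, while the conjugacy
class of `Y = W U` depends only on `|⟨u, w⟩|`, and that of `XY = U (V W) U` only on `|⟨v, w⟩|`
(`exists_unitary`). So `w` may be replaced by any unit vector `w'` with the same two moduli.

Write `w = x + y` with `x ⊥ v` and `y ⊥ u`; the triple product being nonreal means that `⟨x, y⟩` is
nonreal (`decompose`). For `ζ` of modulus one, `x + ζ y` has the same two moduli, and for `ζ`
close to `1` on the appropriate side its norm is less than one, so that adding a suitable positive
multiple of `e₃` gives a unit vector `w'` near `w` (`deform`). Then `u, v, w'` span `ℂ³`, and a vector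
fixed by both `X` and `Y' = W' U` is orthogonal to all three, hence zero (`core`).
-/

attribute [local instance] Matrix.frobeniusNormedAddCommGroup

/-- Relators of the presentation
`⟨x,y,z,h | x^p = h^a, y^q = h^a, z^r = h^c, xyz = 1, h central⟩` of the fundamental group of
the Brieskorn homology sphere `Σ(p,q,r)`; the generators `x, y, z, h` are `0, 1, 2, 3 : Fin 4`. -/
def brieskornRels (p q r : ℕ) (a c : ℤ) : Set (FreeGroup (Fin 4)) :=
  { FreeGroup.of 0 ^ p * (FreeGroup.of 3 ^ a)⁻¹,
    FreeGroup.of 1 ^ q * (FreeGroup.of 3 ^ a)⁻¹,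
    FreeGroup.of 2 ^ r * (FreeGroup.of 3 ^ c)⁻¹,
    FreeGroup.of 0 * FreeGroup.of 1 * FreeGroup.of 2,
    FreeGroup.of 3 * FreeGroup.of 0 * (FreeGroup.of 0 * FreeGroup.of 3)⁻¹,
    FreeGroup.of 3 * FreeGroup.of 1 * (FreeGroup.of 1 * FreeGroup.of 3)⁻¹,
    FreeGroup.of 3 * FreeGroup.of 2 * (FreeGroup.of 2 * FreeGroup.of 3)⁻¹ }

/-- The fundamental group of the Brieskorn homology sphere `Σ(p,q,r)`. -/
abbrev BrieskornGroup (p q r : ℕ) (a c : ℤ) : Type := PresentedGroup (brieskornRels p q r a c)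

namespace BrieskornGroup
variable {p q r : ℕ} {a c : ℤ}
/-- The generator `x`. -/
def x : BrieskornGroup p q r a c := PresentedGroup.of 0
/-- The generator `y`. -/
def y : BrieskornGroup p q r a c := PresentedGroup.of 1
/-- The generator `z`. -/
def z : BrieskornGroup p q r a c := PresentedGroup.of 2
/-- The central generator `h`. -/
def h : BrieskornGroup p q r a c := PresentedGroup.of 3
end BrieskornGroup

open Matrix in
/-- The special unitary group `SU(n)` of `n × n` complex matrices with determinant `1`,
as a subgroup of the unitary group. -/
noncomputable def SU (n : ℕ) : Subgroup (Matrix.unitaryGroup (Fin n) ℂ) where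
  carrier := {A | (A : Matrix (Fin n) (Fin n) ℂ).det = 1}
  one_mem' := by simp
  mul_mem' := by
    intro a b ha hb
    show ((a * b : Matrix.unitaryGroup (Fin n) ℂ) : Matrix (Fin n) (Fin n) ℂ).det = 1
    rw [Submonoid.coe_mul, Matrix.det_mul]
    rw [Set.mem_setOf_eq] at ha hb
    rw [ha, hb, mul_one]
  inv_mem' := by
    intro a ha
    show ((a⁻¹ : Matrix.unitaryGroup (Fin n) ℂ) : Matrix (Fin n) (Fin n) ℂ).det = 1
    rw [Set.mem_setOf_eq] at ha
    have : ((a⁻¹ : Matrix.unitaryGroup (Fin n) ℂ) : Matrix (Fin n) (Fin n) ℂ)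
        = star (a : Matrix (Fin n) (Fin n) ℂ) := rfl
    rw [this]
    show (Matrix.conjTranspose _).det = 1
    rw [Matrix.det_conjTranspose, ha, star_one]

/-- The underlying matrix of an element of `SU(n)`. -/
noncomputable abbrev matSU {n : ℕ} (A : SU n) : Matrix (Fin n) (Fin n) ℂ := A.val.val

/-- A homomorphism `α : G → SU(3)` is irreducible if no complex subspace of `ℂ³` other than
`0` and `ℂ³` is invariant under `α(g)` for every `g`. -/
def IsIrrep {G : Type} [Group G] (α : G →* SU 3) : Prop :=
  ∀ W : Submodule ℂ (Fin 3 → ℂ),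
    (∀ g : G, ∀ v ∈ W, (matSU (α g)).mulVec v ∈ W) → W = ⊥ ∨ W = ⊤

open Matrix

/-! ### Hermitian involutions and unitary equivalence -/

/-- The matrix `2vv* - 1`. For a unit vector `v` it is the Hermitian involution which is `1` on the
line `ℂv` and `-1` on its orthogonal complement. -/
noncomputable def invo (v : Fin 3 → ℂ) : Matrix (Fin 3) (Fin 3) ℂ :=
  (2:ℂ) • vecMulVec v (star v) - 1

lemma invo_mul_self {v : Fin 3 → ℂ} (hv : star v ⬝ᵥ v = 1) : invo v * invo v = 1 := by
  simp only [invo, sub_mul, mul_sub, smul_mul_assoc, mul_smul_comm, vecMulVec_mul_vecMulVec, hv,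
    one_mul, mul_one, one_smul]
  module

lemma invo_star (v : Fin 3 → ℂ) : star (invo v) = invo v := by
  simp [invo, star_eq_conjTranspose, conjTranspose_vecMulVec]

lemma invo_mem_unitary {v : Fin 3 → ℂ} (hv : star v ⬝ᵥ v = 1) :
    invo v ∈ unitaryGroup (Fin 3) ℂ := by
  rw [mem_unitaryGroup_iff, invo_star, invo_mul_self hv]

lemma invo_mulVec (v f : Fin 3 → ℂ) : invo v *ᵥ f = (2 * (star v ⬝ᵥ f)) • v - f := by
  simp [invo, sub_mulVec, smul_mulVec, vecMulVec_mulVec, mul_smul]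

lemma invo_conj {S : Matrix (Fin 3) (Fin 3) ℂ} (hS : S ∈ unitaryGroup (Fin 3) ℂ)
    (v : Fin 3 → ℂ) : invo (S *ᵥ v) = S * invo v * star S := by
  have := mem_unitaryGroup_iff.1 hS
  rw [star_eq_conjTranspose] at this ⊢
  simp only [invo, mul_sub, sub_mul, mul_one, this, mul_smul_comm, smul_mul_assoc, mul_vecMulVec,
    vecMulVec_mul, star_mulVec]

/-- `invo v` depends only on the line spanned by `v`. -/
lemma invo_smul {c : ℂ} (hc : star c * c = 1) (v : Fin 3 → ℂ) : invo (c • v) = invo v := by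
  ext i j
  simp only [invo, vecMulVec, Matrix.sub_apply, Matrix.smul_apply, of_apply, Pi.smul_apply,
    Pi.star_apply, smul_eq_mul, star_mul]
  linear_combination 2 * v i * star (v j) * hc

open scoped ComplexOrder in
/-- Unit vectors `w`, `w'` having the same inner product with `v` are related by a unitary fixing
`v`: for `w ≠ w'` the complex reflection `1 - k⁻¹dd*` with `d = w - w'` and `k = ⟨d, w⟩` works; it
is unitary because `⟨d, d⟩ = k + k̄`. -/
lemma exists_unitary {v w w' : Fin 3 → ℂ} (hw : star w ⬝ᵥ w = 1) (hw' : star w' ⬝ᵥ w' = 1)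
    (h : star v ⬝ᵥ w = star v ⬝ᵥ w') :
    ∃ S ∈ unitaryGroup (Fin 3) ℂ, S *ᵥ v = v ∧ S *ᵥ w = w' := by
  by_cases hd : w = w'
  · exact ⟨1, one_mem _, by simp [hd]⟩
  obtain ⟨d, hdd⟩ : ∃ d, d = w - w' := ⟨_, rfl⟩
  obtain ⟨k, hk⟩ : ∃ k, k = star d ⬝ᵥ w := ⟨_, rfl⟩
  have hk1 : k = 1 - star w' ⬝ᵥ w := by simp [hk, hdd, sub_dotProduct, hw]
  have hsk : star k = 1 - star w ⬝ᵥ w' := by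
    rw [hk1, star_sub, star_one, star_dotProduct, star_star, dotProduct_comm]
  have hdn : star d ⬝ᵥ d = k + star k := by
    rw [hsk, hk1]; simp only [hdd, star_sub, sub_dotProduct, dotProduct_sub, hw, hw']; ring
  have hk0 : k ≠ 0 := by
    intro h0
    rw [h0, star_zero, add_zero] at hdn
    have : d = 0 := dotProduct_star_self_eq_zero.1 hdn
    exact hd (sub_eq_zero.1 (hdd ▸ this))
  have hk0' : star k ≠ 0 := by simpa using hk0
  refine ⟨1 - k⁻¹ • vecMulVec d (star d), ?_, ?_, ?_⟩
  · rw [mem_unitaryGroup_iff]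
    simp only [star_eq_conjTranspose, conjTranspose_sub, conjTranspose_one, conjTranspose_smul,
      conjTranspose_vecMulVec, star_star, sub_mul, mul_sub, one_mul, mul_one, smul_mul_assoc,
      mul_smul_comm, vecMulVec_mul_vecMulVec, hdn, vecMulVec_smul, star_inv₀]
    match_scalars
    · rfl
    · field_simp
      ring
  · have : star d ⬝ᵥ v = 0 := by
      have h2 : star v ⬝ᵥ d = 0 := by rw [hdd, dotProduct_sub, h, sub_self]
      have h3 := congrArg star h2
      rwa [star_dotProduct, star_star, star_zero] at h3
    simp [sub_mulVec, smul_mulVec, vecMulVec_mulVec, this]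
  · simp [sub_mulVec, smul_mulVec, vecMulVec_mulVec, ← hk, smul_smul, hk0]
    simp [hdd]

/-! ### Pairs in SU(2) as products of involutions -/

lemma star_dot (a b : Fin 3 → ℂ) : star (star a ⬝ᵥ b) = star b ⬝ᵥ a := by
  rw [star_dotProduct, star_star]

/-- An element of `SU(3)` fixing `e₃` lies in `SU(2) ⊕ 1`. The proof compares the entries of
`X* = X⁻¹ = adj X`. -/
lemma block_form {X : Matrix (Fin 3) (Fin 3) ℂ} (hX : X ∈ unitaryGroup (Fin 3) ℂ)
    (hdet : X.det = 1) (he : X *ᵥ ![0, 0, 1] = ![0, 0, 1]) :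
    ∃ a b : ℂ, X = !![a, b, 0; -star b, star a, 0; 0, 0, 1] := by
  have h1 := mem_unitaryGroup_iff'.1 hX
  have h2 : star X = X.adjugate := by
    calc star X = star X * (X * X.adjugate) := by rw [mul_adjugate, hdet, one_smul, mul_one]
      _ = X.adjugate := by rw [← mul_assoc, h1, one_mul]
  have he' : star X *ᵥ ![0, 0, 1] = ![0, 0, 1] := by
    conv_lhs => rw [← he]
    rw [mulVec_mulVec, h1, one_mulVec]
  have e (i) := congrFun he i
  have e' (i) := congrFun he' i
  simp only [mulVec, dotProduct, Fin.sum_univ_three, star_apply] at e e'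
  have c0 := e 0
  have c1 := e 1
  have c2 := e 2
  have r0 := e' 0
  have r1 := e' 1
  simp at c0 c1 c2 r0 r1
  rw [adjugate_fin_three] at h2
  have s0 := congrFun (congrFun h2 0) 0
  have s1 := congrFun (congrFun h2 0) 1
  have s2 := congrFun (congrFun h2 1) 0
  simp [star_apply, c0, c1, c2, r0, r1] at s0 s1 s2
  refine ⟨X 0 0, X 0 1, ?_⟩
  ext i j
  fin_cases i <;> fin_cases j <;> simp [c0, c1, c2, r0, r1, s0, s2]

/-- A traceless Hermitian `2 × 2` matrix of determinant `-1`, extended by `-1` on `e₃`, is `invo u`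
for a unit vector `u ∈ ℂ² ⊕ 0`. -/
lemma exists_invo (m : ℝ) (n : ℂ) (h : m ^ 2 + Complex.normSq n = 1) :
    ∃ u : Fin 3 → ℂ, u 2 = 0 ∧ star u ⬝ᵥ u = 1 ∧
      !![(m:ℂ), n, 0; star n, -m, 0; 0, 0, -1] = invo u := by
  have hn : n * star n = 1 - (m:ℂ)^2 := by
    rw [Complex.star_def, Complex.mul_conj, eq_sub_iff_add_eq, add_comm]
    exact_mod_cast h
  have hm : -1 ≤ m := by nlinarith [Complex.normSq_nonneg n]
  rcases hm.eq_or_lt with hm | hm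
  · have hn0 : n = 0 := by
      rw [← hm] at h
      simpa using h
    refine ⟨![0, 1, 0], rfl, by simp [dotProduct, Fin.sum_univ_three], ?_⟩
    ext i j
    fin_cases i <;> fin_cases j <;> simp [invo, vecMulVec, hn0, ← hm] <;> norm_num
  -- The first column of `2uu*` forces `2s² = 1 + m` and `u₁ = n̄ / (2s)`, up to phase.
  · obtain ⟨s, hs0, hs⟩ : ∃ s : ℝ, s ≠ 0 ∧ 2 * s ^ 2 = 1 + m :=
      ⟨√((1 + m) / 2), (Real.sqrt_pos.2 (by linarith)).ne',
        by rw [Real.sq_sqrt (by linarith)]; ring⟩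
    have hsC : 2 * (s:ℂ) ^ 2 = 1 + m := by exact_mod_cast hs
    have hs0C : (s:ℂ) ≠ 0 := by exact_mod_cast hs0
    have key : n * star n = 2 * s ^ 2 * (2 - 2 * s ^2) := by rw [hn, hsC]; ring
    simp only [Complex.star_def] at key
    refine ⟨![s, star n / (2 * s), 0], rfl, ?_, ?_⟩
    · simp [dotProduct, Fin.sum_univ_three, map_ofNat]
      field_simp
      linear_combination key
    · ext i j
      fin_cases i <;> fin_cases j <;> simp [invo, vecMulVec, map_ofNat]
      · linear_combination -hsC
      · field_simp
      · field_simp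
      · field_simp
        linear_combination -key + 2 * s ^ 2 * hsC

/-- The triple products of inner products are traces of products of three rank-one projections;
the lower-order terms cancel in the difference because traces of products of two matrices are
symmetric. -/
lemma trace_triple (u v w : Fin 3 → ℂ) :
    (invo v * invo w * invo u).trace - (invo u * invo w * invo v).trace =
      8 * ((star v ⬝ᵥ w) * (star w ⬝ᵥ u) * (star u ⬝ᵥ v)
        - (star u ⬝ᵥ w) * (star w ⬝ᵥ v) * (star v ⬝ᵥ u)) := by
  have key (a b c : Matrix (Fin 3) (Fin 3) ℂ) :
      (((2:ℂ) • a - 1) * ((2:ℂ) • b - 1) * ((2:ℂ) • c - 1)).trace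
        - (((2:ℂ) • c - 1) * ((2:ℂ) • b - 1) * ((2:ℂ) • a - 1)).trace
        = 8 * ((a * b * c).trace - (c * b * a).trace) := by
    simp only [sub_mul, mul_sub, smul_mul_assoc, mul_smul_comm, one_mul, mul_one, trace_sub,
      trace_smul, smul_eq_mul]
    rw [trace_mul_comm b a, trace_mul_comm c a, trace_mul_comm c b]
    ring
  rw [invo, invo, invo, key]
  simp only [vecMulVec_mul_vecMulVec, trace_vecMulVec, vecMulVec_smul, smul_mul_assoc, trace_smul,
    smul_eq_mul, dotProduct_comm _ (star _)]
  ring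

/-- Two noncommuting elements `X, Y` of `SU(2) ⊕ 1` can be written `X = U V`, `Y = W U` with
Hermitian involutions `U, V, W`. Viewing `SU(2)` as a cover of the rotation group, `U` is the
half-turn about the axis perpendicular to the axes of `X` and `Y`. The triple product of the
corresponding unit vectors is not real, because its imaginary part is proportional to the trace of
`U (X Y - Y X)`. -/
lemma factor {a b c d : ℂ} (h1 : a * star a + b * star b = 1) (h2 : c * star c + d * star d = 1)
    (hne : !![a, b, 0; -star b, star a, 0; 0, 0, 1] * !![c, d, 0; -star d, star c, 0; 0, 0, 1] ≠
      !![c, d, 0; -star d, star c, 0; 0, 0, 1] * !![a, b, 0; -star b, star a, 0; 0, 0, 1]) :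
    ∃ u v w : Fin 3 → ℂ, u 2 = 0 ∧ v 2 = 0 ∧ w 2 = 0 ∧ star u ⬝ᵥ u = 1 ∧ star v ⬝ᵥ v = 1 ∧
      star w ⬝ᵥ w = 1 ∧ !![a, b, 0; -star b, star a, 0; 0, 0, 1] = invo u * invo v ∧
      !![c, d, 0; -star d, star c, 0; 0, 0, 1] = invo w * invo u ∧
      ((star u ⬝ᵥ v) * (star v ⬝ᵥ w) * (star w ⬝ᵥ u)).im ≠ 0 := by
  obtain ⟨a1, a2⟩ := a
  obtain ⟨b1, b2⟩ := b
  obtain ⟨c1, c2⟩ := c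
  obtain ⟨d1, d2⟩ := d
  have h1' : a1 ^ 2 + a2 ^ 2 + b1 ^ 2 + b2 ^ 2 = 1 := by
    have := congrArg Complex.re h1
    simp at this; linarith
  have h2' : c1 ^ 2 + c2 ^ 2 + d1 ^ 2 + d2 ^ 2 = 1 := by
    have := congrArg Complex.re h2
    simp at this; linarith
  -- `s` is the length of the cross product of the (unnormalised) axis vectors of `X` and `Y`.
  obtain ⟨s, hs⟩ : ∃ s, s = √((d2*b1-d1*b2)^2 + (d1*a2-b1*c2)^2 + (d2*a2-b2*c2)^2) := ⟨_, rfl⟩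
  have hs2 : s ^ 2 = (d2*b1-d1*b2)^2 + (d1*a2-b1*c2)^2 + (d2*a2-b2*c2)^2 := by
    rw [hs, Real.sq_sqrt (by positivity)]
  have hs0 : s ≠ 0 := by
    intro h0
    rw [h0] at hs2
    have e1 : d2*b1-d1*b2 = 0 := by nlinarith
    have e2 : d1*a2-b1*c2 = 0 := by nlinarith
    have e3 : d2*a2-b2*c2 = 0 := by nlinarith
    apply hne
    ext i j
    fin_cases i <;> fin_cases j <;> simp [Matrix.mul_apply, Fin.sum_univ_three] <;>
      apply Complex.ext <;> simp <;> linarith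
  obtain ⟨m, hm⟩ : ∃ m, m = (d2*b1-d1*b2) / s := ⟨_, rfl⟩
  obtain ⟨n1, hn1⟩ : ∃ n, n = (d1*a2-b1*c2) / s := ⟨_, rfl⟩
  obtain ⟨n2, hn2⟩ : ∃ n, n = (d2*a2-b2*c2) / s := ⟨_, rfl⟩
  have hmn : m ^ 2 + n1 ^ 2 + n2 ^ 2 = 1 := by
    rw [hm, hn1, hn2]; field_simp; linarith
  have hm' : m * s = d2*b1-d1*b2 := by rw [hm]; field_simp
  have hn1' : n1 * s = d1*a2-b1*c2 := by rw [hn1]; field_simp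
  have hn2' : n2 * s = d2*a2-b2*c2 := by rw [hn2]; field_simp
  -- The axis of `U` is perpendicular to those of `X` and `Y`, so `U X` and `Y U` are traceless.
  have imV : m * a2 - n2 * b1 + n1 * b2 = 0 := by
    rw [hm, hn1, hn2]; field_simp; ring
  have imW : m * c2 + n1 * d2 - n2 * d1 = 0 := by
    rw [hm, hn1, hn2]; field_simp; ring
  clear hm hn1 hn2 hs
  obtain ⟨u, hu2, hu, hU⟩ := exists_invo m ⟨n1, n2⟩ (by simp [Complex.normSq]; linarith)
  -- `V = U X` and `W = Y U`, written out by entries.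
  obtain ⟨v, hv2, hv, hV⟩ := exists_invo (m*a1 - n1*b1 - n2*b2)
    ⟨m*b1+n1*a1+n2*a2, m*b2+n2*a1-n1*a2⟩ (by
      simp [Complex.normSq]
      linear_combination (a1 ^ 2 + a2 ^ 2 + b1 ^ 2 + b2 ^ 2) * hmn + h1' - (m * a2 - n2 * b1 + n1 * b2) * imV)
  obtain ⟨w, hw2, hw, hW⟩ := exists_invo (m*c1 + n1*d1 + n2*d2)
    ⟨c1*n1-c2*n2-m*d1, c1*n2+c2*n1-m*d2⟩ (by
      simp [Complex.normSq]
      linear_combination (c1 ^ 2 + c2 ^ 2 + d1 ^ 2 + d2 ^ 2) * hmn + h2' - (m * c2 + n1 * d2 - n2 * d1) * imW)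
  have hUX : invo u * !![⟨a1, a2⟩, ⟨b1, b2⟩, 0; -star ⟨b1, b2⟩, star ⟨a1, a2⟩, 0; 0, 0, 1]
      = invo v := by
    rw [← hU, ← hV]
    ext i j
    fin_cases i <;> fin_cases j <;> simp [Matrix.mul_apply, Fin.sum_univ_three] <;>
      apply Complex.ext <;> simp <;> linarith
  have hYU : !![⟨c1, c2⟩, ⟨d1, d2⟩, 0; -star ⟨d1, d2⟩, star ⟨c1, c2⟩, 0; 0, 0, 1] * invo u
      = invo w := by
    rw [← hU, ← hW]
    ext i j
    fin_cases i <;> fin_cases j <;> simp [Matrix.mul_apply, Fin.sum_univ_three] <;>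
      apply Complex.ext <;> simp <;> linarith
  have hX := congrArg (invo u * ·) hUX
  have hY := congrArg (· * invo u) hYU
  simp only [← mul_assoc, invo_mul_self hu, one_mul] at hX
  simp only [mul_assoc, invo_mul_self hu, mul_one] at hY
  refine ⟨u, v, w, hu2, hv2, hw2, hu, hv, hw, hX, hY, ?_⟩
  intro him
  have ht := trace_triple u v w
  have hstar : (star u ⬝ᵥ w) * (star w ⬝ᵥ v) * (star v ⬝ᵥ u)
      = star ((star u ⬝ᵥ v) * (star v ⬝ᵥ w) * (star w ⬝ᵥ u)) := by
    simp only [star_mul, star_dot]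
    ring
  rw [hstar, Complex.star_def, Complex.conj_eq_iff_im.2 him] at ht
  have ht' : (invo v * invo w * invo u).trace - (invo u * invo w * invo v).trace = 0 := by
    rw [ht]; ring
  have e1 : invo v * invo w * invo u = invo u * (invo u * invo v * (invo w * invo u)) := by
    simp only [← mul_assoc, invo_mul_self hu, one_mul]
  have e2 : invo u * invo w * invo v = invo u * (invo w * invo u * (invo u * invo v)) := by
    rw [mul_assoc (invo w), ← mul_assoc (invo u) (invo u), invo_mul_self hu, one_mul, mul_assoc]
  rw [e1, e2, ← hX, ← hY, ← hU] at ht'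
  have hi := congrArg Complex.im ht'
  simp [trace_fin_three] at hi
  apply hs0
  -- The trace of `U (X Y - Y X)` is `4 i s`.
  have : s * (m ^ 2 + n1 ^ 2 + n2 ^ 2) = 0 := by
    linear_combination hi / 4 + m * hm' + n1 * hn1' + n2 * hn2'
  rwa [hmn, mul_one] at this

/-! ### The deformation -/

/-- Over `ℂ² ⊕ 0`, a nonreal triple product forces `u, v` to be independent, and then `w` splits
along the directions perpendicular to `v` and to `u`. The inner product of the two components is
minus the triple product divided by the squared modulus of the determinant of `(u, v)`. -/
lemma decompose {u v w : Fin 3 → ℂ} (hu2 : u 2 = 0) (hv2 : v 2 = 0) (hw2 : w 2 = 0)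
    (hv : star v ⬝ᵥ v = 1)
    (hT : ((star u ⬝ᵥ v) * (star v ⬝ᵥ w) * (star w ⬝ᵥ u)).im ≠ 0) :
    u 0 * v 1 - u 1 * v 0 ≠ 0 ∧
    ∃ x y : Fin 3 → ℂ, x 2 = 0 ∧ y 2 = 0 ∧ w = x + y ∧ star u ⬝ᵥ y = 0 ∧ star v ⬝ᵥ x = 0 ∧
      (star x ⬝ᵥ y).im ≠ 0 := by
  obtain ⟨D, hD⟩ : ∃ D, D = u 0 * v 1 - u 1 * v 0 := ⟨_, rfl⟩
  have hDs : star D = star (u 0) * star (v 1) - star (u 1) * star (v 0) := by simp [hD]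
  obtain ⟨T, hTT⟩ : ∃ T, T = (star u ⬝ᵥ v) * (star v ⬝ᵥ w) * (star w ⬝ᵥ u) := ⟨_, rfl⟩
  rw [← hTT] at hT
  simp only [dotProduct, Fin.sum_univ_three, Pi.star_apply, hu2, hv2, hw2, star_zero, mul_zero, add_zero] at hTT hv
  -- If `D = 0`, then `u` and `v` are parallel and the triple product is `|⟨u, w⟩|²`.
  have hD0 : D ≠ 0 := by
    intro h0
    rw [h0, star_zero] at hDs
    apply hT
    rw [← Complex.conj_eq_iff_im, ← Complex.star_def]
    have : T = (star (u 0) * w 0 + star (u 1) * w 1) * (star (w 0) * u 0 + star (w 1) * u 1) := by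
      rw [hTT]
      linear_combination (star (w 0) * u 0 + star (w 1) * u 1) * ((star (u 0) * w 0 + star (u 1) * w 1) * hv
        + (v 1 * w 0 - v 0 * w 1) * hDs)
    rw [this]
    simp only [star_mul, star_add, star_star]
  refine ⟨hD ▸ hD0, ?_⟩
  have hD0' : star D ≠ 0 := by simpa using hD0
  obtain ⟨A, hA⟩ : ∃ A, A = (star (u 0) * w 0 + star (u 1) * w 1) / star D := ⟨_, rfl⟩
  obtain ⟨B, hB⟩ : ∃ B, B = (star (v 0) * w 0 + star (v 1) * w 1) / star D := ⟨_, rfl⟩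
  refine ⟨![A * star (v 1), -A * star (v 0), 0], ![-B * star (u 1), B * star (u 0), 0], rfl, rfl, ?_, ?_, ?_, ?_⟩
  · ext i
    fin_cases i
    · simp [hA, hB]
      simp only [← Complex.star_def]
      field_simp
      rw [hDs]
      ring
    · simp [hA, hB]
      simp only [← Complex.star_def]
      field_simp
      rw [hDs]
      ring
    · simp [hw2]
  · simp [dotProduct, Fin.sum_univ_three, hu2]
    ring
  · simp [dotProduct, Fin.sum_univ_three, hv2]
    ring
  · have hDD : (D * star D) * (star ![A * star (v 1), -A * star (v 0), 0] ⬝ᵥ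
        ![-B * star (u 1), B * star (u 0), 0]) = -T := by
      rw [hTT]
      simp [dotProduct, Fin.sum_univ_three, hA, hB]
      simp only [← Complex.star_def]
      field_simp
      ring
    intro him
    apply hT
    have hDn : D * star D = (Complex.normSq D : ℂ) := Complex.mul_conj D
    rw [hDn] at hDD
    have := congrArg Complex.im hDD
    rw [Complex.im_ofReal_mul, him, Complex.neg_im] at this
    linarith

open Filter Topology

/-- The unit vector `w` can be moved out of the plane `ℂ² ⊕ 0` while keeping its inner product with
`u` and the modulus of its inner product with `v`. For `w = x + y` as in `decompose` the path is
`w'(t) = x + ζ y + √τ e₃`, where `ζ = ζ(t)` has modulus one and `τ = 2 Re ((1 - ζ)⟨x, y⟩)` restores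
the norm; since `⟨x, y⟩` is not real, the direction in which `ζ` leaves `1` can be chosen so that
`τ > 0`. -/
lemma deform {u v w : Fin 3 → ℂ} (hu2 : u 2 = 0) (hv2 : v 2 = 0) (hw2 : w 2 = 0)
    (hv : star v ⬝ᵥ v = 1) (hw : star w ⬝ᵥ w = 1)
    (hT : ((star u ⬝ᵥ v) * (star v ⬝ᵥ w) * (star w ⬝ᵥ u)).im ≠ 0) :
    ∃ w' : ℝ → Fin 3 → ℂ, Tendsto w' (𝓝[>] 0) (𝓝 w) ∧
      ∀ᶠ t in 𝓝[>] 0, w' t 2 ≠ 0 ∧ star (w' t) ⬝ᵥ w' t = 1 ∧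
        star u ⬝ᵥ w' t = star u ⬝ᵥ w ∧
        ∃ ζ : ℂ, star ζ * ζ = 1 ∧ star v ⬝ᵥ w' t = ζ * (star v ⬝ᵥ w) := by
  obtain ⟨-, x, y, hx2, hy2, rfl, huy, hvx, him⟩ := decompose hu2 hv2 hw2 hv hT
  obtain ⟨g, hg⟩ : ∃ g, g = star x ⬝ᵥ y := ⟨_, rfl⟩
  rw [← hg] at him
  have hgs : star y ⬝ᵥ x = star g := by rw [hg, star_dot]
  -- The Cayley transform of `t * g.im`, a rational parametrisation of the unit circle near `1`;
  -- the factor `g.im` gives `τ` the leading term `4 t (g.im)²`, positive for `t > 0`.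
  let ζ : ℝ → ℂ := fun t => (1 + (t * g.im : ℝ) * Complex.I) / (1 - (t * g.im : ℝ) * Complex.I)
  let τ : ℝ → ℝ := fun t => 2 * ((1 - ζ t) * g).re
  have hne (s : ℝ) : (1 - (s : ℂ) * Complex.I) ≠ 0 := by
    intro h
    have := congrArg Complex.re h
    simp at this
  have hne' (s : ℝ) : (1 + (s : ℂ) * Complex.I) ≠ 0 := by
    intro h
    have := congrArg Complex.re h
    simp at this
  have hζ (t) : star (ζ t) * ζ t = 1 := by
    have h1 := hne (t * g.im)
    have h2 := hne' (t * g.im)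
    simp only [ζ, Complex.star_def, map_div₀, map_add, map_sub, map_one, map_mul, Complex.conj_ofReal,
      Complex.conj_I, mul_neg, sub_neg_eq_add, ← sub_eq_add_neg]
    field_simp
  have hζc : Continuous ζ := by
    refine Continuous.div (by fun_prop) (by fun_prop) fun t => hne _
  have hζ0 : ζ 0 = 1 := by simp [ζ]
  have hτc : Continuous τ := by
    refine continuous_const.mul (Complex.continuous_re.comp ?_)
    exact (continuous_const.sub hζc).mul continuous_const
  have hτ0 : τ 0 = 0 := by simp [τ, hζ0]
  have hτf (t) : τ t = 4 * t * g.im ^ 2 * (1 + t * g.re) / (1 + (t * g.im) ^ 2) := by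
    have h3 : (1 : ℝ) + (t * g.im) ^ 2 ≠ 0 := by positivity
    have h1 : 1 - ζ t = (((2 * (t * g.im) ^ 2 / (1 + (t * g.im) ^ 2) : ℝ)) : ℂ)
        - ((2 * (t * g.im) / (1 + (t * g.im) ^ 2) : ℝ) : ℂ) * Complex.I := by
      have h1 := hne (t * g.im)
      have h3' : (1 : ℂ) + ((t * g.im : ℝ) : ℂ) ^ 2 ≠ 0 := by exact_mod_cast h3
      simp only [ζ]
      generalize t * g.im = s at *
      push_cast
      field_simp
      linear_combination (-2 * (s:ℂ) ^ 2) * Complex.I_sq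
    have h4 (α β : ℝ) : (((α : ℂ) - β * Complex.I) * g).re = α * g.re + β * g.im := by simp
    simp only [τ]
    rw [h1, h4]
    field_simp
    ring
  have hpos : ∀ᶠ t in 𝓝[>] (0:ℝ), 0 < τ t := by
    have h1 : ∀ᶠ t in 𝓝 (0:ℝ), 0 < 1 + t * g.re := by
      have : ContinuousAt (fun t : ℝ => 1 + t * g.re) 0 := by fun_prop
      exact this.eventually (lt_mem_nhds (by simp))
    filter_upwards [h1.filter_mono nhdsWithin_le_nhds, self_mem_nhdsWithin] with t ht1 ht2
    have ht2 : 0 < t := ht2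
    rw [hτf]
    positivity
  refine ⟨fun t => x + ζ t • y + (√(τ t) : ℂ) • ![0, 0, 1], ?_, ?_⟩
  · have : Continuous fun t => x + ζ t • y + (√(τ t) : ℂ) • (![0, 0, 1] : Fin 3 → ℂ) := by
      fun_prop
    have h2 := this.tendsto 0
    simp only [hζ0, hτ0, one_smul, Real.sqrt_zero, Complex.ofReal_zero, zero_smul, add_zero] at h2
    exact h2.mono_left nhdsWithin_le_nhds
  · filter_upwards [hpos] with t ht
    have hs := Real.mul_self_sqrt ht.le
    have hsC : (√(τ t) : ℂ) * √(τ t) = (1 - ζ t) * g + star ((1 - ζ t) * g) := by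
      rw [Complex.star_def, Complex.add_conj, ← Complex.ofReal_mul, hs]
    have e1 (a : Fin 3 → ℂ) (ha : a 2 = 0) : star a ⬝ᵥ ![0, 0, 1] = 0 := by
      simp [dotProduct, Fin.sum_univ_three, ha]
    have e2 (a : Fin 3 → ℂ) (ha : a 2 = 0) : star (![0, 0, 1] : Fin 3 → ℂ) ⬝ᵥ a = 0 := by
      simp [dotProduct, Fin.sum_univ_three, ha]
    have e3 : star (![0, 0, 1] : Fin 3 → ℂ) ⬝ᵥ ![0, 0, 1] = 1 := by
      simp [dotProduct, Fin.sum_univ_three]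
    have hr : star (√(τ t) : ℂ) = √(τ t) := Complex.conj_ofReal _
    refine ⟨?_, ?_, ?_, ζ t, hζ t, ?_⟩
    · simp [hx2, hy2, (Real.sqrt_pos.2 ht).ne']
    · simp only [star_add, dotProduct_add, add_dotProduct, hgs, ← hg] at hw
      simp only [star_add, star_smul, dotProduct_add, add_dotProduct, smul_dotProduct,
        dotProduct_smul, smul_eq_mul, e1 x hx2, e1 y hy2, e2 x hx2, e2 y hy2, e3, hgs, ← hg, hr]
      rw [star_mul', star_sub, star_one] at hsC
      linear_combination hw + hsC + (star y ⬝ᵥ y) * hζ t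
    · simp only [dotProduct_add, dotProduct_smul, e1 u hu2, huy, mul_zero, add_zero,
        smul_eq_mul]
    · simp only [dotProduct_add, dotProduct_smul, e1 v hv2, hvx, mul_zero, add_zero, zero_add,
        smul_eq_mul]

lemma continuous_invo : Continuous invo := by
  refine continuous_matrix fun i j => ?_
  simp only [invo, vecMulVec, Matrix.sub_apply, Matrix.smul_apply, of_apply, Pi.star_apply]
  fun_prop

/-- Noncommuting `X, Y` in `SU(2) ⊕ 1` admit a deformation `Y'` of `Y` with `Y'` conjugate to `Y`
and `X Y'` conjugate to `X Y`, such that `X, Y'` have no common fixed vector. With `X = U V` and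
`Y = W U` as in `factor`, `Y' = W' U` where `W' = invo w'` for `w'` from `deform`. -/
lemma core {X Y : Matrix (Fin 3) (Fin 3) ℂ} (hX : X ∈ unitaryGroup (Fin 3) ℂ)
    (hXd : X.det = 1) (hXe : X *ᵥ ![0, 0, 1] = ![0, 0, 1]) (hY : Y ∈ unitaryGroup (Fin 3) ℂ)
    (hYd : Y.det = 1) (hYe : Y *ᵥ ![0, 0, 1] = ![0, 0, 1]) (hne : X * Y ≠ Y * X) :
    ∃ Y' : ℝ → Matrix (Fin 3) (Fin 3) ℂ, Tendsto Y' (𝓝[>] 0) (𝓝 Y) ∧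
      ∀ᶠ t in 𝓝[>] 0, (∃ S ∈ unitaryGroup (Fin 3) ℂ, Y' t = S * Y * star S) ∧
        (∃ S ∈ unitaryGroup (Fin 3) ℂ, X * Y' t = S * (X * Y) * star S) ∧
        ∀ f, X *ᵥ f = f → Y' t *ᵥ f = f → f = 0 := by
  have norm_one {a b : ℂ} {M : Matrix (Fin 3) (Fin 3) ℂ} (hM : M ∈ unitaryGroup (Fin 3) ℂ)
      (h : M = !![a, b, 0; -star b, star a, 0; 0, 0, 1]) : a * star a + b * star b = 1 := by
    have := congrFun (congrFun (mem_unitaryGroup_iff.1 hM) 0) 0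
    simpa [h, Matrix.mul_apply, Fin.sum_univ_three] using this
  obtain ⟨a, b, hXab⟩ := block_form hX hXd hXe
  obtain ⟨c, d, hYcd⟩ := block_form hY hYd hYe
  obtain ⟨u, v, w, hu2, hv2, hw2, hu, hv, hw, hXf, hYf, hT⟩ :=
    factor (norm_one hX hXab) (norm_one hY hYcd) (by rw [← hXab, ← hYcd]; exact hne)
  rw [← hXab] at hXf
  rw [← hYcd] at hYf
  have hD := (decompose hu2 hv2 hw2 hv hT).1
  obtain ⟨w', hw't, hw'⟩ := deform hu2 hv2 hw2 hv hw hT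
  refine ⟨fun t => invo (w' t) * invo u, ?_, ?_⟩
  · rw [hYf]
    have : Continuous fun z : Fin 3 → ℂ => invo z * invo u :=
      continuous_invo.matrix_mul continuous_const
    exact (this.tendsto w).comp hw't
  filter_upwards [hw'] with t ⟨ht2, htn, htu, ζ, hζ, htv⟩
  refine ⟨?_, ?_, ?_⟩
  -- `W' U` is conjugate to `W U`, since `w'` and `w` have the same inner product with `u`.
  · obtain ⟨S, hS, hSu, hSw⟩ := exists_unitary hw htn htu.symm
    refine ⟨S, hS, ?_⟩
    have h1 : invo u = S * invo u * star S := by rw [← invo_conj hS, hSu]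
    calc invo (w' t) * invo u = (S * invo w * star S) * (S * invo u * star S) := by
          rw [← h1, ← invo_conj hS, hSw]
      _ = S * invo w * (star S * S) * invo u * star S := by simp only [mul_assoc]
      _ = _ := by rw [mem_unitaryGroup_iff'.1 hS, hYf]; simp only [mul_assoc, one_mul]
  -- `V W'` is conjugate to `V W`, and conjugating by `U` turns these into `X Y'` and `X Y`.
  · obtain ⟨S, hS, hSv, hSw⟩ := exists_unitary (v := v) (w := ζ • w) (w' := w' t)
      (by rw [star_smul, smul_dotProduct, dotProduct_smul, hw, smul_eq_mul, smul_eq_mul, mul_one, hζ])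
      htn (by rw [dotProduct_smul, htv, smul_eq_mul])
    have hUu := invo_mem_unitary hu
    refine ⟨invo u * S * invo u, mul_mem (mul_mem hUu hS) hUu, ?_⟩
    have h1 : invo v = S * invo v * star S := by rw [← invo_conj hS, hSv]
    have h2 : invo (w' t) = S * invo w * star S := by
      rw [← invo_smul hζ w, ← invo_conj hS, hSw]
    have hUU (M : Matrix (Fin 3) (Fin 3) ℂ) : invo u * (invo u * M) = M := by
      rw [← mul_assoc, invo_mul_self hu, one_mul]
    have hSS (M : Matrix (Fin 3) (Fin 3) ℂ) : star S * (S * M) = M := by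
      rw [← mul_assoc, mem_unitaryGroup_iff'.1 hS, one_mul]
    rw [h2, hXf, hYf]
    conv_lhs => rw [h1]
    simp only [star_mul, invo_star, mul_assoc, hUU, hSS]
  -- A common fixed vector `f` has `U f = V f = W' f`; as `u, v, w'` are pairwise independent, `f` is
  -- orthogonal to all three, and these span the space.
  · intro f hXe hYe
    have hVU : invo v *ᵥ f = invo u *ᵥ f := by
      conv_rhs => rw [← hXe, hXf, mulVec_mulVec, ← mul_assoc, invo_mul_self hu, one_mul]
    have hWU : invo (w' t) *ᵥ f = invo u *ᵥ f := by
      conv_lhs => rw [← hYe, mulVec_mulVec, ← mul_assoc, invo_mul_self htn, one_mul]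
    rw [invo_mulVec, invo_mulVec, sub_left_inj] at hVU hWU
    have v0 := congrFun hVU 0
    have v1 := congrFun hVU 1
    have w2 := congrFun hWU 2
    simp only [Pi.smul_apply, smul_eq_mul, hu2, mul_zero] at v0 v1 w2
    have hfu : star u ⬝ᵥ f = 0 := by
      have : (star u ⬝ᵥ f) * (u 0 * v 1 - u 1 * v 0) = 0 := by
        linear_combination (v 0 * v1 - v 1 * v0) / 2
      exact (mul_eq_zero.1 this).resolve_right hD
    have hfv : star v ⬝ᵥ f = 0 := by
      have : (star v ⬝ᵥ f) * (u 0 * v 1 - u 1 * v 0) = 0 := by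
        linear_combination (u 0 * v1 - u 1 * v0) / 2
      exact (mul_eq_zero.1 this).resolve_right hD
    have hfw : star (w' t) ⬝ᵥ f = 0 := by
      simpa [ht2] using w2
    have hD' : star (u 0) * star (v 1) - star (u 1) * star (v 0) ≠ 0 := by
      have := star_ne_zero.2 hD
      simpa using this
    simp only [dotProduct, Fin.sum_univ_three, Pi.star_apply, hu2, hv2, star_zero, zero_mul,
      add_zero] at hfu hfv hfw
    have f0 : f 0 = 0 := by
      have : f 0 * (star (u 0) * star (v 1) - star (u 1) * star (v 0)) = 0 := by
        linear_combination star (v 1) * hfu - star (u 1) * hfv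
      exact (mul_eq_zero.1 this).resolve_right hD'
    have f1 : f 1 = 0 := by
      have : f 1 * (star (u 0) * star (v 1) - star (u 1) * star (v 0)) = 0 := by
        linear_combination star (u 0) * hfv - star (v 0) * hfu
      exact (mul_eq_zero.1 this).resolve_right hD'
    have f2 : f 2 = 0 := by
      simpa [f0, f1, ht2] using hfw
    ext i
    fin_cases i <;> simp [f0, f1, f2]

/-! ### Representations of the Brieskorn group killing `h` -/

/-- The triangle group with pairwise coprime exponents has trivial abelianization. -/
lemma eq_one_of_coprime {M : Type*} [Monoid M] {p q r : ℕ} (hpq : Nat.Coprime p q)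
    (hqr : Nat.Coprime q r) (hpr : Nat.Coprime p r) {x y : M} (hxy : Commute x y)
    (hx : x ^ p = 1) (hy : y ^ q = 1) (hz : (x * y) ^ r = 1) : x = 1 ∧ y = 1 := by
  rw [hxy.mul_pow] at hz
  have hc : Commute (x ^ r) (y ^ r) := hxy.pow_pow r r
  constructor
  · have h1 : x ^ (r * q) = 1 := by
      have : (x ^ r * y ^ r) ^ q = 1 := by rw [hz, one_pow]
      rwa [hc.mul_pow, ← pow_mul, ← pow_mul, mul_comm r q, pow_mul y, hy, one_pow, mul_one,
        mul_comm] at this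
    have h2 := Nat.dvd_gcd (orderOf_dvd_of_pow_eq_one hx) (orderOf_dvd_of_pow_eq_one h1)
    rw [Nat.Coprime.gcd_eq_one (hpr.mul_right hpq), Nat.dvd_one] at h2
    exact orderOf_eq_one_iff.1 h2
  · have h1 : y ^ (r * p) = 1 := by
      have : (x ^ r * y ^ r) ^ p = 1 := by rw [hz, one_pow]
      rwa [hc.mul_pow, ← pow_mul, ← pow_mul, mul_comm r p, pow_mul x, hx, one_pow, one_mul,
        mul_comm] at this
    have h2 := Nat.dvd_gcd (orderOf_dvd_of_pow_eq_one hy) (orderOf_dvd_of_pow_eq_one h1)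
    rw [Nat.Coprime.gcd_eq_one (hqr.mul_right hpq.symm), Nat.dvd_one] at h2
    exact orderOf_eq_one_iff.1 h2

namespace BrieskornGroup
variable {p q r : ℕ} {a c : ℤ}

lemma x_pow : (x : BrieskornGroup p q r a c) ^ p = h ^ a := by
  have : PresentedGroup.mk (brieskornRels p q r a c)
      (FreeGroup.of 0 ^ p * (FreeGroup.of 3 ^ a)⁻¹) = 1 :=
    PresentedGroup.one_of_mem (by simp [brieskornRels])
  rw [map_mul, map_inv, mul_inv_eq_one, map_pow, map_zpow] at this
  exact this

lemma y_pow : (y : BrieskornGroup p q r a c) ^ q = h ^ a := by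
  have : PresentedGroup.mk (brieskornRels p q r a c)
      (FreeGroup.of 1 ^ q * (FreeGroup.of 3 ^ a)⁻¹) = 1 :=
    PresentedGroup.one_of_mem (by simp [brieskornRels])
  rw [map_mul, map_inv, mul_inv_eq_one, map_pow, map_zpow] at this
  exact this

lemma z_pow : (z : BrieskornGroup p q r a c) ^ r = h ^ c := by
  have : PresentedGroup.mk (brieskornRels p q r a c)
      (FreeGroup.of 2 ^ r * (FreeGroup.of 3 ^ c)⁻¹) = 1 :=
    PresentedGroup.one_of_mem (by simp [brieskornRels])
  rw [map_mul, map_inv, mul_inv_eq_one, map_pow, map_zpow] at this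
  exact this

lemma xyz : (x * y * z : BrieskornGroup p q r a c) = 1 := by
  have : PresentedGroup.mk (brieskornRels p q r a c)
      (FreeGroup.of 0 * FreeGroup.of 1 * FreeGroup.of 2) = 1 :=
    PresentedGroup.one_of_mem (by simp [brieskornRels])
  rw [map_mul, map_mul] at this
  exact this

/-- A homomorphism killing `h` factors through the triangle group
`⟨x, y | x^p = y^q = (xy)^r = 1⟩`. -/
lemma triangle_rels {G : Type*} [Group G] (β : BrieskornGroup p q r a c →* G) (hh : β h = 1) :
    β x ^ p = 1 ∧ β y ^ q = 1 ∧ (β x * β y) ^ r = 1 ∧ β z = (β x * β y)⁻¹ := by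
  have hz : β z = (β x * β y)⁻¹ := by
    rw [eq_comm, inv_eq_iff_mul_eq_one, ← map_mul, ← map_mul, xyz, map_one]
  refine ⟨?_, ?_, ?_, hz⟩
  · rw [← map_pow, x_pow, map_zpow, hh, _root_.one_zpow]
  · rw [← map_pow, y_pow, map_zpow, hh, _root_.one_zpow]
  · rw [← inv_inv (β x * β y), ← hz, inv_pow, ← map_pow, z_pow, map_zpow, hh, _root_.one_zpow, inv_one]

/-- Converse of `triangle_rels`: triangle group relations define a homomorphism killing `h`. -/
lemma exists_hom {G : Type*} [Group G] {X Y : G} (hX : X ^ p = 1) (hY : Y ^ q = 1)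
    (hXY : (X * Y) ^ r = 1) :
    ∃ β : BrieskornGroup p q r a c →* G, β x = X ∧ β y = Y ∧ β h = 1 := by
  have H : ∀ s ∈ brieskornRels p q r a c, FreeGroup.lift ![X, Y, (X * Y)⁻¹, 1] s = 1 := by
    intro s hs
    simp only [brieskornRels, Set.mem_insert_iff, Set.mem_singleton_iff] at hs
    have hXY' : (Y⁻¹ * X⁻¹) ^ r = 1 := by rw [← _root_.mul_inv_rev, inv_pow, hXY, inv_one]
    rcases hs with rfl | rfl | rfl | rfl | rfl | rfl | rfl <;> simp [hX, hY, hXY']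
  exact ⟨PresentedGroup.toGroup H, by simp [x], by simp [y], by simp [h]⟩

end BrieskornGroup

/-- An eigenvalue of an element of order dividing `n` is an `n`-th root of unity. -/
lemma SU_pow_apply {n : ℕ} {A : SU 3} (hA : A ^ n = 1) {f : Fin 3 → ℂ} {l : ℂ} (hf : f ≠ 0)
    (h : matSU A *ᵥ f = l • f) : l ^ n = 1 := by
  have h1 : ∀ k : ℕ, matSU A ^ k *ᵥ f = l ^ k • f := by
    intro k
    induction k with
    | zero => simp
    | succ k ih => rw [pow_succ, ← mulVec_mulVec, h, mulVec_smul, ih, smul_smul, pow_succ']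
  have h2 : matSU A ^ n = 1 := by
    exact congrArg (fun B : SU 3 => matSU B) hA
  have h3 := h1 n
  rw [h2, one_mulVec] at h3
  have h4 : (l ^ n - 1) • f = 0 := by rw [sub_smul, ← h3, one_smul, sub_self]
  exact sub_eq_zero.1 ((smul_eq_zero.1 h4).resolve_right hf)

/-- A reducible representation in `SU(3)` has an invariant line: either the invariant subspace
itself or the orthogonal complement of an invariant plane. -/
lemma exists_eigenvector {G : Type} [Group G] (β : G →* SU 3) (hβ : ¬ IsIrrep β) :
    ∃ f : Fin 3 → ℂ, f ≠ 0 ∧ ∀ g, ∃ l : ℂ, matSU (β g) *ᵥ f = l • f := by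
  simp only [IsIrrep, not_forall, not_or] at hβ
  obtain ⟨W, hW, hbot, htop⟩ := hβ
  have h3 : Module.finrank ℂ (Fin 3 → ℂ) = 3 := by simp
  have hlt : Module.finrank ℂ W < 3 := (Submodule.finrank_lt htop).trans_eq h3
  have hpos : 0 < Module.finrank ℂ W := by
    rw [Module.finrank_pos_iff]
    exact Submodule.nontrivial_iff_ne_bot.2 hbot
  have : Module.finrank ℂ W = 1 ∨ Module.finrank ℂ W = 2 := by omega
  rcases this with h1 | h2
  · obtain ⟨⟨f, hfW⟩, hf0, hf⟩ := finrank_eq_one_iff'.1 h1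
    refine ⟨f, fun h => hf0 (by simp [h]), fun g => ?_⟩
    obtain ⟨l, hl⟩ := hf ⟨_, hW g f hfW⟩
    exact ⟨l, (congrArg Subtype.val hl).symm⟩
  · let e := WithLp.linearEquiv 2 ℂ (Fin 3 → ℂ)
    let W' : Submodule ℂ (EuclideanSpace ℂ (Fin 3)) := W.map e.symm.toLinearMap
    have hW' : Module.finrank ℂ W' = 2 := by
      rw [← h2]; exact LinearEquiv.finrank_map_eq e.symm W
    have hperp : Module.finrank ℂ W'ᗮ = 1 := by
      have := Submodule.finrank_add_finrank_orthogonal W'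
      rw [hW', finrank_euclideanSpace_fin] at this
      omega
    obtain ⟨⟨f, hfW⟩, hf0, hf⟩ := finrank_eq_one_iff'.1 hperp
    have mem (k : Fin 3 → ℂ) : e.symm k ∈ W'ᗮ ↔ ∀ w ∈ W, star w ⬝ᵥ k = 0 := by
      rw [Submodule.mem_orthogonal]
      constructor
      · intro h w hw
        have := h (e.symm w) (Submodule.mem_map_of_mem hw)
        rwa [EuclideanSpace.inner_eq_star_dotProduct, dotProduct_comm] at this
      · rintro h _ ⟨w, hw, rfl⟩
        rw [EuclideanSpace.inner_eq_star_dotProduct, dotProduct_comm]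
        exact h w hw
    have hfm := (mem (e f)).1 (by simpa using hfW)
    refine ⟨e f, fun h => hf0 (by simpa using h), fun g => ?_⟩
    have hg : e.symm (matSU (β g) *ᵥ e f) ∈ W'ᗮ := by
      rw [mem]
      intro w hw
      have h5 := hfm _ (hW g⁻¹ w hw)
      have h6 : matSU (β g⁻¹) = (matSU (β g))ᴴ := by rw [map_inv]; rfl
      rwa [h6, star_mulVec, conjTranspose_conjTranspose, ← dotProduct_mulVec] at h5
    obtain ⟨l, hl⟩ := hf ⟨_, hg⟩
    refine ⟨l, ?_⟩
    have h7 := congrArg (fun z => e (Subtype.val z)) hl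
    simpa using h7.symm

/-- A reducible representation killing `h` has a common fixed vector, since the character by which
it acts on an invariant line is trivial by `eq_one_of_coprime`. -/
lemma exists_fixed {p q r : ℕ} (hpq : Nat.Coprime p q) (hqr : Nat.Coprime q r)
    (hpr : Nat.Coprime p r) {a c : ℤ} (β : BrieskornGroup p q r a c →* SU 3)
    (hh : β BrieskornGroup.h = 1) (hβ : ¬ IsIrrep β) :
    ∃ f : Fin 3 → ℂ, f ≠ 0 ∧ matSU (β BrieskornGroup.x) *ᵥ f = f ∧
      matSU (β BrieskornGroup.y) *ᵥ f = f := by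
  obtain ⟨f, hf0, hf⟩ := exists_eigenvector β hβ
  obtain ⟨hx, hy, hxy, -⟩ := BrieskornGroup.triangle_rels β hh
  obtain ⟨l, hl⟩ := hf BrieskornGroup.x
  obtain ⟨m, hm⟩ := hf BrieskornGroup.y
  have hlm : matSU (β BrieskornGroup.x * β BrieskornGroup.y) *ᵥ f = (l * m) • f := by
    have : matSU (β BrieskornGroup.x * β BrieskornGroup.y)
      = matSU (β BrieskornGroup.x) * matSU (β BrieskornGroup.y) := rfl
    rw [this, ← mulVec_mulVec, hm, mulVec_smul, hl, smul_smul, mul_comm]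
  obtain ⟨rfl, rfl⟩ := eq_one_of_coprime hpq hqr hpr (Commute.all l m)
    (SU_pow_apply hx hf0 hl) (SU_pow_apply hy hf0 hm) (SU_pow_apply hxy hf0 hlm)
  exact ⟨f, hf0, by simpa using hl, by simpa using hm⟩

/-- `core` for a pair `X, Y` in `SU(3)` with an arbitrary common fixed vector `f`, obtained by
conjugating with a unitary `Q` that maps `e₃` to the line of `f`. -/
lemma core_SU {X Y : SU 3} {f : Fin 3 → ℂ} (hf : f ≠ 0) (hXf : matSU X *ᵥ f = f)
    (hYf : matSU Y *ᵥ f = f) (hne : X * Y ≠ Y * X) {ε : ℝ} (hε : 0 < ε) :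
    ∃ (Y' : SU 3) (S T : unitaryGroup (Fin 3) ℂ), Y'.val = S * Y.val * S⁻¹ ∧
      X.val * Y'.val = T * (X.val * Y.val) * T⁻¹ ∧
      (∀ g, matSU X *ᵥ g = g → matSU Y' *ᵥ g = g → g = 0) ∧
      ‖matSU Y' - matSU Y‖ < ε ∧ ‖matSU (X * Y')⁻¹ - matSU (X * Y)⁻¹‖ < ε := by
  obtain ⟨e, he1, hXe, hYe⟩ : ∃ e : Fin 3 → ℂ, star e ⬝ᵥ e = 1 ∧ matSU X *ᵥ e = e ∧
      matSU Y *ᵥ e = e := by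
    obtain ⟨k, hk0, hk⟩ : ∃ k : ℝ, k ≠ 0 ∧ star f ⬝ᵥ f = (k : ℂ) ^ 2 := by
      have hn : 0 < ∑ i, Complex.normSq (f i) := by
        obtain ⟨i, hi⟩ := Function.ne_iff.1 hf
        exact Finset.sum_pos' (fun i _ => Complex.normSq_nonneg _)
          ⟨i, Finset.mem_univ i, Complex.normSq_pos.2 hi⟩
      refine ⟨√(∑ i, Complex.normSq (f i)), (Real.sqrt_pos.2 hn).ne', ?_⟩
      rw [← Complex.ofReal_pow, Real.sq_sqrt hn.le]
      simp [dotProduct, Complex.normSq_eq_conj_mul_self]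
    have hkC : (k : ℂ) ≠ 0 := by exact_mod_cast hk0
    refine ⟨(k : ℂ)⁻¹ • f, ?_, ?_, ?_⟩
    · rw [star_smul, smul_dotProduct, dotProduct_smul, hk]
      simp
      field_simp
    · rw [mulVec_smul, hXf]
    · rw [mulVec_smul, hYf]
  obtain ⟨Q, hQ, -, hQe⟩ := exists_unitary (v := 0) (w := ![0, 0, 1]) (w' := e)
    (by simp [dotProduct, Fin.sum_univ_three]) he1 (by simp)
  have hQ1 := mem_unitaryGroup_iff.1 hQ
  have hQ2 := mem_unitaryGroup_iff'.1 hQ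
  have hQs : star Q ∈ unitaryGroup (Fin 3) ℂ := Unitary.star_mem hQ
  have hQe' : star Q *ᵥ e = ![0, 0, 1] := by rw [← hQe, mulVec_mulVec, hQ2, one_mulVec]
  have hQdet : (star Q).det * Q.det = 1 := by rw [← det_mul, hQ2, det_one]
  have hQl (M : Matrix (Fin 3) (Fin 3) ℂ) : Q * (star Q * M) = M := by
    rw [← mul_assoc, hQ1, one_mul]
  have hQl' (M : Matrix (Fin 3) (Fin 3) ℂ) : star Q * (Q * M) = M := by
    rw [← mul_assoc, hQ2, one_mul]
  have conj_mem (A : SU 3) : star Q * matSU A * Q ∈ unitaryGroup (Fin 3) ℂ :=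
    mul_mem (mul_mem hQs A.val.2) hQ
  have conj_det (A : SU 3) : (star Q * matSU A * Q).det = 1 := by
    have : (matSU A).det = 1 := A.2
    rw [det_mul, det_mul, this, mul_one, hQdet]
  have conj_fix {A : SU 3} (h : matSU A *ᵥ e = e) :
      (star Q * matSU A * Q) *ᵥ ![0, 0, 1] = ![0, 0, 1] := by
    rw [← mulVec_mulVec, ← mulVec_mulVec, hQe, h, hQe']
  have hne' : (star Q * matSU X * Q) * (star Q * matSU Y * Q) ≠
      (star Q * matSU Y * Q) * (star Q * matSU X * Q) := by
    intro h
    apply hne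
    have h1 := congrArg (fun M => Q * M * star Q) h
    simp only [mul_assoc, hQl, hQ1, mul_one] at h1
    exact Subtype.ext (Subtype.ext h1)
  obtain ⟨Y', hY't, hY'⟩ := core (conj_mem X) (conj_det X) (conj_fix hXe) (conj_mem Y)
    (conj_det Y) (conj_fix hYe) hne'
  have lim1 : Tendsto (fun t => Q * Y' t * star Q) (𝓝[>] 0) (𝓝 (matSU Y)) := by
    have hc : Continuous fun M : Matrix (Fin 3) (Fin 3) ℂ => Q * M * star Q :=
      (continuous_const.matrix_mul continuous_id).matrix_mul continuous_const
    have := (hc.tendsto _).comp hY't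
    simpa only [Function.comp_def, mul_assoc, hQl, hQ1, mul_one] using this
  have lim2 : Tendsto (fun t => star (matSU X * (Q * Y' t * star Q))) (𝓝[>] 0)
      (𝓝 (star (matSU X * matSU Y))) := by
    have hc : Continuous fun M : Matrix (Fin 3) (Fin 3) ℂ => star (matSU X * M) :=
      (continuous_const.matrix_mul continuous_id).matrix_conjTranspose
    exact (hc.tendsto _).comp lim1
  have near1 := (tendsto_iff_norm_sub_tendsto_zero.1 lim1).eventually (gt_mem_nhds hε)
  have near2 := (tendsto_iff_norm_sub_tendsto_zero.1 lim2).eventually (gt_mem_nhds hε)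
  obtain ⟨t, ⟨⟨S, hS, hSY⟩, ⟨T, hT, hTX⟩, hfix⟩, hn1, hn2⟩ := (hY'.and (near1.and near2)).exists
  have hS1 := mem_unitaryGroup_iff.1 hS
  let P : unitaryGroup (Fin 3) ℂ := ⟨Q * S * star Q, mul_mem (mul_mem hQ hS) hQs⟩
  let R : unitaryGroup (Fin 3) ℂ := ⟨Q * T * star Q, mul_mem (mul_mem hQ hT) hQs⟩
  have hP : (P * Y.val * P⁻¹).val = Q * Y' t * star Q := by
    change Q * S * star Q * matSU Y * star (Q * S * star Q) = _
    rw [hSY]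
    simp only [star_mul, star_star, mul_assoc]
  have hPdet : P * Y.val * P⁻¹ ∈ SU 3 := by
    change (Matrix.det (P * Y.val * P⁻¹).val) = 1
    have h1 : (Y' t).det = 1 := by
      have h2 : S.det * (star S).det = 1 := by rw [← det_mul, hS1, det_one]
      rw [hSY, det_mul, det_mul, conj_det, mul_one, h2]
    rw [hP, det_mul, det_mul, h1, mul_one, mul_comm, hQdet]
  refine ⟨⟨_, hPdet⟩, P, R, rfl, ?_, ?_, ?_, ?_⟩
  · apply Subtype.ext
    change matSU X * (P * Y.val * P⁻¹).val
      = Q * T * star Q * (matSU X * matSU Y) * star (Q * T * star Q)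
    rw [hP]
    have h1 := congrArg (fun M => Q * M * star Q) hTX
    simp only [mul_assoc, hQl] at h1
    simp only [star_mul, star_star, mul_assoc, h1]
  · intro g hXg hYg
    change (P * Y.val * P⁻¹).val *ᵥ g = g at hYg
    rw [hP] at hYg
    have h1 : star Q *ᵥ g = 0 := by
      apply hfix
      · rw [mulVec_mulVec, mul_assoc, hQ1, mul_one, ← mulVec_mulVec, hXg]
      · conv_rhs => rw [← hYg]
        rw [mulVec_mulVec, mulVec_mulVec, mul_assoc, hQl']
    rw [← one_mulVec g, ← hQ1, ← mulVec_mulVec, h1, mulVec_zero]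
  · change ‖(P * Y.val * P⁻¹).val - matSU Y‖ < ε
    rw [hP]
    exact hn1
  · change ‖star (matSU X * (P * Y.val * P⁻¹).val) - star (matSU X * matSU Y)‖ < ε
    rw [hP]
    exact hn2

/-- A nontrivial reducible `α : π₁(Σ(p,q,r)) → SU(3)` with `α(h) = I` is a
limit of irreducible representations: for every `ε > 0` there is an irreducible
`β : π → SU(3)` with `‖β(g) − α(g)‖ < ε` for each generator `g ∈ {x,y,z,h}`. -/
theorem reducible_limit_of_irreducibles (p q r : ℕ) (hp : 0 < p) (hq : 0 < q) (hr : 0 < r)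
    (hpq : Nat.Coprime p q) (hqr : Nat.Coprime q r) (hpr : Nat.Coprime p r)
    (a c : ℤ) (hac : a * ((p : ℤ) + q) * r + c * p * q = 1)
    (α : BrieskornGroup p q r a c →* SU 3)
    (hred : ¬ IsIrrep α) (hnt : ∃ g, α g ≠ 1) (hh : α BrieskornGroup.h = 1) :
    ∀ ε > (0 : ℝ), ∃ β : BrieskornGroup p q r a c →* SU 3, IsIrrep β ∧
      ‖matSU (β BrieskornGroup.x) - matSU (α BrieskornGroup.x)‖ < ε ∧
      ‖matSU (β BrieskornGroup.y) - matSU (α BrieskornGroup.y)‖ < ε ∧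
      ‖matSU (β BrieskornGroup.z) - matSU (α BrieskornGroup.z)‖ < ε ∧
      ‖matSU (β BrieskornGroup.h) - matSU (α BrieskornGroup.h)‖ < ε := by
  intro ε hε
  obtain ⟨f, hf0, hfx, hfy⟩ := exists_fixed hpq hqr hpr α hh hred
  obtain ⟨hx, hy, hxy, hz⟩ := BrieskornGroup.triangle_rels α hh
  have hne : α BrieskornGroup.x * α BrieskornGroup.y ≠ α BrieskornGroup.y * α BrieskornGroup.x := by
    intro hcomm
    obtain ⟨h1, h2⟩ := eq_one_of_coprime hpq hqr hpr hcomm hx hy hxy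
    obtain ⟨g, hg⟩ := hnt
    have hα : α = 1 := by
      refine PresentedGroup.ext fun i => ?_
      fin_cases i
      · exact h1
      · exact h2
      · change α BrieskornGroup.z = 1
        rw [hz, h1, h2, mul_one, inv_one]
      · exact hh
    exact hg (by rw [hα, MonoidHom.one_apply])
  obtain ⟨Y, S, T, hYS, hXYT, hfix, hn1, hn2⟩ := core_SU hf0 hfx hfy hne hε
  have hYq : Y ^ q = 1 := by
    apply Subtype.ext
    change Y.val ^ q = 1
    have : (α BrieskornGroup.y).val ^ q = 1 := congrArg Subtype.val hy
    rw [hYS, conj_pow, this, mul_one, mul_inv_cancel]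
  have hXYr : (α BrieskornGroup.x * Y) ^ r = 1 := by
    apply Subtype.ext
    change ((α BrieskornGroup.x).val * Y.val) ^ r = 1
    have : ((α BrieskornGroup.x).val * (α BrieskornGroup.y).val) ^ r = 1 :=
      congrArg Subtype.val hxy
    rw [hXYT, conj_pow, this, mul_one, mul_inv_cancel]
  obtain ⟨β, hβx, hβy, hβh⟩ := BrieskornGroup.exists_hom (a := a) (c := c) hx hYq hXYr
  refine ⟨β, ?_, ?_, ?_, ?_, ?_⟩
  · by_contra hβ
    obtain ⟨g, hg0, hgx, hgy⟩ := exists_fixed hpq hqr hpr β hβh hβ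
    rw [hβx] at hgx
    rw [hβy] at hgy
    exact hg0 (hfix g hgx hgy)
  · rw [hβx, sub_self, norm_zero]
    exact hε
  · rw [hβy]
    exact hn1
  · rw [(BrieskornGroup.triangle_rels β hβh).2.2.2, hz, hβx, hβy]
    exact hn2
  · rw [hβh, hh, sub_self, norm_zero]
    exact hε
end

section
/- Suppose r = 2 (so p and q are odd and pairwise coprime to each other and to 2, and a·(p+q)·2 + c·p·q = 1). Then every homomorphism α: π → SU(2) with α(h) = I is trivial: α(g) = I for all g ∈ π. -/
/-- An involution of `SU(2)` is `±1`, hence central. -/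
theorem SU2_commute_of_sq_eq_one (Z X : SU 2) (hZ : Z ^ 2 = 1) : Commute Z X := by
  have hdet : (matSU Z).det = 1 := Z.2
  have hsq : matSU Z * matSU Z = 1 := by
    have h := congrArg matSU hZ
    rw [pow_two] at h
    exact h
  rw [Matrix.det_fin_two] at hdet
  have h00 := congrFun (congrFun hsq 0) 0
  have h01 := congrFun (congrFun hsq 0) 1
  have h10 := congrFun (congrFun hsq 1) 0
  have h11 := congrFun (congrFun hsq 1) 1
  simp only [Matrix.mul_apply, Fin.sum_univ_two, Matrix.one_apply, Fin.isValue, if_true,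
    zero_ne_one, one_ne_zero, if_false] at h00 h01 h10 h11
  -- A traceless matrix with square `1` would have determinant `-1`.
  have htr : matSU Z 0 0 + matSU Z 1 1 ≠ 0 := by
    intro h
    have h2 : (2 : ℂ) = 0 := by linear_combination matSU Z 0 0 * h - h00 - hdet
    norm_num at h2
  have hb : matSU Z 0 1 = 0 :=
    (mul_eq_zero.mp (by linear_combination h01 :
      matSU Z 0 1 * (matSU Z 0 0 + matSU Z 1 1) = 0)).resolve_right htr
  have hc : matSU Z 1 0 = 0 :=
    (mul_eq_zero.mp (by linear_combination h10 :
      matSU Z 1 0 * (matSU Z 0 0 + matSU Z 1 1) = 0)).resolve_right htr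
  have hd : matSU Z 0 0 = matSU Z 1 1 :=
    sub_eq_zero.mp ((mul_eq_zero.mp (by linear_combination h00 - h11 :
      (matSU Z 0 0 - matSU Z 1 1) * (matSU Z 0 0 + matSU Z 1 1) = 0)).resolve_right htr)
  apply Subtype.ext
  apply Subtype.ext
  change matSU Z * matSU X = matSU X * matSU Z
  ext i j
  fin_cases i <;> fin_cases j <;>
    simp [Matrix.mul_apply, Fin.sum_univ_two, hb, hc, hd, mul_comm]

/-- Elements satisfying the `(p, q, 2)` triangle relations, with `p`, `q`, `2` pairwise coprime, are
trivial as soon as they commute; `Z` commuting with `X` suffices for that. -/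
theorem triangle_trivial {G : Type*} [Group G] {p q : ℕ} (hpq : Nat.Coprime p q)
    (hp2 : Nat.Coprime p 2) (hq2 : Nat.Coprime q 2) {X Y Z : G} (hX : X ^ p = 1) (hY : Y ^ q = 1)
    (hZ : Z ^ 2 = 1) (hXYZ : X * Y * Z = 1) (hZX : Commute Z X) : X = 1 ∧ Y = 1 ∧ Z = 1 := by
  have hXY : X * Y = Z⁻¹ := eq_inv_of_mul_eq_one_left hXYZ
  have hYeq : Y = X⁻¹ * Z⁻¹ := by rw [← hXY]; group
  have hcomm : Commute X Y := by
    rw [hYeq]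
    exact ((Commute.refl X).inv_right).mul_right hZX.symm.inv_right
  have hpow : ∀ n, X ^ (2 * n) * Y ^ (2 * n) = 1 := by
    intro n
    rw [← hcomm.mul_pow, hXY, inv_pow, pow_mul, hZ, one_pow, inv_one]
  have key : ∀ {W : G} {m n : ℕ}, W ^ m = 1 → W ^ n = 1 → Nat.Coprime m n → W = 1 := by
    intro W m n h1 h2 h
    have := pow_gcd_eq_one.mpr ⟨h1, h2⟩
    rwa [Nat.Coprime.gcd_eq_one h, pow_one] at this
  have hX1 : X = 1 := by
    refine key hX (n := 2 * q) ?_ (Nat.Coprime.mul_right hp2 hpq)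
    have h := hpow q
    rwa [mul_comm 2 q, pow_mul Y, hY, one_pow, mul_one, mul_comm q 2] at h
  have hY1 : Y = 1 := by
    refine key hY (n := 2 * p) ?_ (Nat.Coprime.mul_right hq2 hpq.symm)
    have h := hpow p
    rwa [hX1, one_pow, one_mul] at h
  refine ⟨hX1, hY1, ?_⟩
  simpa [hX1, hY1] using hXYZ

/-- If `r = 2`, every homomorphism `α : π₁(Σ(p,q,2)) → SU(2)` with
`α(h) = I` is trivial. -/
theorem SU2_rep_trivial_of_r_eq_two (p q : ℕ) (hp : 0 < p) (hq : 0 < q)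
    (hpq : Nat.Coprime p q) (hp2 : Nat.Coprime p 2) (hq2 : Nat.Coprime q 2)
    (a c : ℤ) (hac : a * ((p : ℤ) + q) * 2 + c * p * q = 1)
    (α : BrieskornGroup p q 2 a c →* SU 2) (hh : α BrieskornGroup.h = 1) :
    ∀ g : BrieskornGroup p q 2 a c, α g = 1 := by
  have rel : ∀ w ∈ brieskornRels p q 2 a c,
      α (PresentedGroup.mk (brieskornRels p q 2 a c) w) = 1 := by
    intro w hw
    rw [PresentedGroup.one_of_mem hw, map_one]
  have hh' : α (PresentedGroup.mk (brieskornRels p q 2 a c) (FreeGroup.of 3)) = 1 := hh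
  have hX := rel (FreeGroup.of 0 ^ p * (FreeGroup.of 3 ^ a)⁻¹) (by simp [brieskornRels])
  have hY := rel (FreeGroup.of 1 ^ q * (FreeGroup.of 3 ^ a)⁻¹) (by simp [brieskornRels])
  have hZ := rel (FreeGroup.of 2 ^ 2 * (FreeGroup.of 3 ^ c)⁻¹) (by simp [brieskornRels])
  have hXYZ := rel (FreeGroup.of 0 * FreeGroup.of 1 * FreeGroup.of 2) (by simp [brieskornRels])
  simp only [map_mul, map_pow, map_inv, map_zpow, hh', one_zpow, inv_one, mul_one]
    at hX hY hZ hXYZ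
  obtain ⟨h0, h1, h2⟩ := triangle_trivial hpq hp2 hq2 hX hY hZ hXYZ
    (SU2_commute_of_sq_eq_one _ _ hZ)
  have hα : α = 1 := by
    apply PresentedGroup.ext
    intro i
    fin_cases i
    · exact h0
    · exact h1
    · exact h2
    · exact hh'
  intro g
  rw [hα, MonoidHom.one_apply]
end

section
/- Let α: π_Z → SU(3) be an irreducible homomorphism. Then α(h) = e^{2πik/3}·I for some integer k, H^0(π_Z; su(3)_α) = 0, and the real dimension of H^1(π_Z; su(3)_α) equals 4 if both α(x) and α(y) have three pairwise distinct eigenvalues, and equals 2 otherwise. -/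
/-!
By Schur's lemma an irreducible `α` sends central elements to scalars of determinant one, so `α(h)`
is a cube root of unity times the identity, and the invariants of `su(3)`, being traceless scalars,
vanish.

For `H¹`, let `V = su(3)`. The value of a cocycle at `h` is an invariant vector, because `h` is
central and acts trivially; hence it is zero. A cocycle is then determined by its values at `x` and
`y`, and the relations `x^p = h^a = y^q` say exactly that these values lie in the kernels of the
norm operators `1 + A + ⋯ + A^(n-1)` for `A = Ad α(x)`, `n = p` and `A = Ad α(y)`, `n = q`
(`range_evalXY`; existence comes from an affine action of the group on `V`). As `A^n = 1`, such a
kernel has dimension `8 - dim ker (A - 1)`. Coboundaries form a copy of `V`, so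
`dim H¹ = 8 - dim V^x - dim V^y` (`finrank_H1_add`).

The fixed space `V^x` is the centralizer of `α(x)` in `su(3)`. A power of `α(x)` is scalar, so
`α(x)` has an orthonormal eigenbasis (`exists_isEigenbasis`), and the centralizer has dimension `2`
or `4` when the number of distinct eigenvalues is `3` or `2`. Irreducibility forbids a common
eigenvector of `α(x)` and `α(y)`; this excludes scalar `α(x)` or `α(y)`, and it excludes that both
have a two-dimensional eigenspace, since two planes in `ℂ³` meet. The remaining cases give `4` and
`2`.
-/

/-- Relators of the presentation `⟨x,y,h | x^p = h^a, y^q = h^a, h central⟩` of the fundamental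
group of the complement `Z` of the singular `r`-fiber in `Σ(p,q,r)`;
the generators `x, y, h` are `0, 1, 2 : Fin 3`. -/
def knotRels (p q : ℕ) (a : ℤ) : Set (FreeGroup (Fin 3)) :=
  { FreeGroup.of 0 ^ p * (FreeGroup.of 2 ^ a)⁻¹,
    FreeGroup.of 1 ^ q * (FreeGroup.of 2 ^ a)⁻¹,
    FreeGroup.of 2 * FreeGroup.of 0 * (FreeGroup.of 0 * FreeGroup.of 2)⁻¹,
    FreeGroup.of 2 * FreeGroup.of 1 * (FreeGroup.of 1 * FreeGroup.of 2)⁻¹ }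

/-- The fundamental group `π₁(Z)` of the complement of the singular `r`-fiber
in the Brieskorn sphere `Σ(p,q,r)`. -/
abbrev KnotGroup (p q : ℕ) (a : ℤ) : Type := PresentedGroup (knotRels p q a)

namespace KnotGroup
variable {p q : ℕ} {a : ℤ}
/-- The generator `x`. -/
def x : KnotGroup p q a := PresentedGroup.of 0
/-- The generator `y`. -/
def y : KnotGroup p q a := PresentedGroup.of 1
/-- The central generator `h`. -/
def h : KnotGroup p q a := PresentedGroup.of 2
end KnotGroup

open Matrix in
/-- The Lie algebra `su(3)` of traceless skew-Hermitian `3 × 3` complex matrices,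
as a real submodule of the `3 × 3` complex matrices. -/
noncomputable def su3 : Submodule ℝ (Matrix (Fin 3) (Fin 3) ℂ) where
  carrier := {X | Xᴴ = -X ∧ X.trace = 0}
  add_mem' := by
    rintro X Y ⟨hX1, hX2⟩ ⟨hY1, hY2⟩
    exact ⟨by rw [conjTranspose_add, hX1, hY1, neg_add], by rw [trace_add, hX2, hY2, add_zero]⟩
  zero_mem' := ⟨by simp, by simp⟩
  smul_mem' := by
    rintro r X ⟨hX1, hX2⟩
    constructor
    · rw [conjTranspose_smul, hX1, star_trivial, smul_neg]
    · rw [trace_smul, hX2, smul_zero]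

open Matrix in
/-- The representation of a group `G` on `su(3)`, pulled back along `α : G → SU(3)` from the
adjoint action `g • X = α(g) · X · α(g)⁻¹`. -/
noncomputable def adjRep {G : Type} [Group G] (α : G →* SU 3) : Representation ℝ G su3 where
  toFun g :=
    { toFun := fun X =>
        ⟨matSU (α g) * (X : Matrix (Fin 3) (Fin 3) ℂ) * matSU ((α g)⁻¹), by
          obtain ⟨hX1, hX2⟩ := X.2
          have hV : matSU ((α g)⁻¹) = star (matSU (α g)) := rfl
          have h1 : star (matSU (α g)) * matSU (α g) = 1 := (α g).val.prop.1
          constructor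
          · show (matSU (α g) * (X : Matrix (Fin 3) (Fin 3) ℂ) * matSU ((α g)⁻¹))ᴴ = _
            rw [Matrix.conjTranspose_mul, Matrix.conjTranspose_mul, hX1, hV,
              Matrix.star_eq_conjTranspose, Matrix.conjTranspose_conjTranspose]
            simp only [Matrix.neg_mul, Matrix.mul_neg]
            rw [← Matrix.star_eq_conjTranspose, ← hV]
            noncomm_ring
          · show Matrix.trace
                (matSU (α g) * (X : Matrix (Fin 3) (Fin 3) ℂ) * matSU ((α g)⁻¹)) = 0
            rw [Matrix.trace_mul_cycle, hV, h1, Matrix.one_mul, hX2]⟩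
      map_add' := by intro X Y; apply Subtype.ext; simp [mul_add, add_mul]
      map_smul' := by intro r X; apply Subtype.ext; simp [Matrix.mul_smul, Matrix.smul_mul] }
  map_one' := by
    apply LinearMap.ext; intro X; apply Subtype.ext
    show matSU (α 1) * (X : Matrix (Fin 3) (Fin 3) ℂ) * matSU ((α 1)⁻¹)
      = (X : Matrix (Fin 3) (Fin 3) ℂ)
    rw [_root_.map_one, inv_one]
    show (1 : Matrix (Fin 3) (Fin 3) ℂ) * (X : Matrix (Fin 3) (Fin 3) ℂ) *
      (1 : Matrix (Fin 3) (Fin 3) ℂ) = (X : Matrix (Fin 3) (Fin 3) ℂ)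
    simp
  map_mul' := by
    intro g g'
    apply LinearMap.ext; intro X; apply Subtype.ext
    show matSU (α (g * g')) * (X : Matrix (Fin 3) (Fin 3) ℂ) * matSU ((α (g * g'))⁻¹)
      = matSU (α g) * (matSU (α g') * (X : Matrix (Fin 3) (Fin 3) ℂ) * matSU ((α g')⁻¹))
        * matSU ((α g)⁻¹)
    rw [_root_.map_mul, _root_.mul_inv_rev]
    show matSU (α g) * matSU (α g') * (X : Matrix (Fin 3) (Fin 3) ℂ)
        * (matSU ((α g')⁻¹) * matSU ((α g)⁻¹))
      = matSU (α g) * (matSU (α g') * (X : Matrix (Fin 3) (Fin 3) ℂ) * matSU ((α g')⁻¹))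
        * matSU ((α g)⁻¹)
    noncomm_ring

/-! ### Cocycles on the knot group -/

namespace KnotGroup

variable {p q : ℕ} {a : ℤ}

theorem closure_eq_top (K : Subgroup (KnotGroup p q a)) (hx : x ∈ K) (hy : y ∈ K) (hh : h ∈ K) :
    K = ⊤ := by
  rw [eq_top_iff, ← PresentedGroup.closure_range_of, Subgroup.closure_le]
  rintro _ ⟨i, rfl⟩
  fin_cases i
  · exact hx
  · exact hy
  · exact hh

theorem x_pow : (x : KnotGroup p q a) ^ p = h ^ a := by
  have : PresentedGroup.mk (knotRels p q a) (FreeGroup.of 0 ^ p * (FreeGroup.of 2 ^ a)⁻¹) = 1 :=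
    PresentedGroup.one_of_mem (by simp [knotRels])
  rw [map_mul, map_inv, mul_inv_eq_one, map_pow, map_zpow] at this
  exact this

theorem y_pow : (y : KnotGroup p q a) ^ q = h ^ a := by
  have : PresentedGroup.mk (knotRels p q a) (FreeGroup.of 1 ^ q * (FreeGroup.of 2 ^ a)⁻¹) = 1 :=
    PresentedGroup.one_of_mem (by simp [knotRels])
  rw [map_mul, map_inv, mul_inv_eq_one, map_pow, map_zpow] at this
  exact this

theorem h_mul_x : (h : KnotGroup p q a) * x = x * h := by
  have : PresentedGroup.mk (knotRels p q a)
      (FreeGroup.of 2 * FreeGroup.of 0 * (FreeGroup.of 0 * FreeGroup.of 2)⁻¹) = 1 :=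
    PresentedGroup.one_of_mem (by simp [knotRels])
  rw [map_mul, map_inv, mul_inv_eq_one] at this
  exact this

theorem h_mul_y : (h : KnotGroup p q a) * y = y * h := by
  have : PresentedGroup.mk (knotRels p q a)
      (FreeGroup.of 2 * FreeGroup.of 1 * (FreeGroup.of 1 * FreeGroup.of 2)⁻¹) = 1 :=
    PresentedGroup.one_of_mem (by simp [knotRels])
  rw [map_mul, map_inv, mul_inv_eq_one] at this
  exact this

theorem h_mul (g : KnotGroup p q a) : h * g = g * h := by
  have hK : Subgroup.centralizer {(h : KnotGroup p q a)} = ⊤ := by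
    apply closure_eq_top <;> rw [Subgroup.mem_centralizer_singleton_iff]
    · exact h_mul_x.symm
    · exact h_mul_y.symm
  have := Subgroup.mem_top g
  rw [← hK, Subgroup.mem_centralizer_singleton_iff] at this
  exact this.symm

end KnotGroup

section Cocycles

open groupCohomology

variable {V : Type} [AddCommGroup V] [Module ℝ V]

/-- The norm operator `1 + A + ⋯ + A ^ (n - 1)`. -/
noncomputable def normOp (A : V →ₗ[ℝ] V) (n : ℕ) : V →ₗ[ℝ] V := ∑ i ∈ Finset.range n, A ^ i

/-- If `A ^ n = 1`, the image of the norm operator is the fixed space of `A`, so its kernel is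
complementary in dimension to that fixed space. -/
theorem finrank_ker_normOp [FiniteDimensional ℝ V] (A : V →ₗ[ℝ] V) (n : ℕ) (hn : 0 < n)
    (hA : A ^ n = 1) :
    Module.finrank ℝ (LinearMap.ker (normOp A n)) + Module.finrank ℝ (LinearMap.ker (A - 1))
      = Module.finrank ℝ V := by
  have hr : LinearMap.range (normOp A n) = LinearMap.ker (A - 1) := by
    apply le_antisymm
    · rintro _ ⟨v, rfl⟩
      have : (A - 1) * normOp A n = 0 := by
        rw [normOp, mul_geom_sum, hA, sub_self]
      exact LinearMap.congr_fun this v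
    · intro v hv
      have hv' : A v = v := by simpa [sub_eq_zero] using hv
      have hpow : ∀ i, (A ^ i) v = v := by
        intro i
        induction i with
        | zero => simp
        | succ i ih => rw [pow_succ, Module.End.mul_apply, hv', ih]
      refine ⟨(n : ℝ)⁻¹ • v, ?_⟩
      have hn' : (n : ℝ) ≠ 0 := by positivity
      rw [map_smul, normOp, LinearMap.sum_apply]
      simp only [hpow, Finset.sum_const, Finset.card_range]
      rw [← Nat.cast_smul_eq_nsmul ℝ, smul_smul, inv_mul_cancel₀ hn', one_smul]
  rw [← hr, add_comm]
  exact LinearMap.finrank_range_add_finrank_ker _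

theorem finrank_submodule_prod [FiniteDimensional ℝ V] (S T : Submodule ℝ V) :
    Module.finrank ℝ (S.prod T) = Module.finrank ℝ S + Module.finrank ℝ T := by
  have hinj : Function.Injective (S.subtype.prodMap T.subtype) :=
    Function.Injective.prodMap S.injective_subtype T.injective_subtype
  have hr : LinearMap.range (S.subtype.prodMap T.subtype) = S.prod T := by
    simp [LinearMap.range_prodMap]
  rw [← hr, LinearMap.finrank_range_of_inj hinj, Module.finrank_prod]

/-- The zeros of a cocycle form a subgroup. -/
def cocycleZeros {G : Type} [Group G] {ρ : Representation ℝ G V} (c : cocycles₁ (Rep.of ρ)) :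
    Subgroup G where
  carrier := {g | c g = 0}
  one_mem' := cocycles₁_map_one c
  mul_mem' := by
    intro g g' hg hg'
    have := (mem_cocycles₁_iff c).1 c.2 g g'
    rw [Set.mem_ofPred_eq] at *
    rw [this, hg, hg', map_zero, add_zero]
  inv_mem' := by
    intro g hg
    rw [Set.mem_ofPred_eq] at *
    have h1 := (mem_cocycles₁_iff c).1 c.2 g⁻¹ g
    rw [inv_mul_cancel, cocycles₁_map_one, hg, map_zero, zero_add] at h1
    exact h1.symm

theorem cocycle_pow {G : Type} [Group G] {ρ : Representation ℝ G V} (c : cocycles₁ (Rep.of ρ))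
    (g : G) (n : ℕ) : c (g ^ n) = normOp (ρ g) n (c g) := by
  induction n with
  | zero => simp [normOp]
  | succ n ih =>
    rw [pow_succ, (mem_cocycles₁_iff c).1 c.2, ih, normOp, normOp, Finset.sum_range_succ,
      LinearMap.add_apply, add_comm, Rep.of_ρ, map_pow]

/-- The affine permutation `v ↦ ρ g v + w` of a representation space. -/
def affinePerm {G : Type} [Group G] (ρ : Representation ℝ G V) (g : G) (w : V) :
    Equiv.Perm V where
  toFun v := ρ g v + w
  invFun v := ρ g⁻¹ (v - w)
  left_inv v := by simp
  right_inv v := by simp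

theorem affinePerm_pow {G : Type} [Group G] (ρ : Representation ℝ G V) (g : G) (w : V) (n : ℕ)
    (v : V) : (affinePerm ρ g w ^ n) v = (ρ g ^ n) v + normOp (ρ g) n w := by
  induction n generalizing v with
  | zero => simp [normOp]
  | succ n ih =>
    rw [pow_succ, Equiv.Perm.mul_apply, ih]
    simp [affinePerm, normOp, Finset.sum_range_succ, pow_succ]
    abel

variable {p q : ℕ} {a : ℤ} (ρ : Representation ℝ (KnotGroup p q a) V)

theorem mem_invariants_of_generators (hh : ρ KnotGroup.h = 1) {v : V}
    (hx : ρ KnotGroup.x v = v) (hy : ρ KnotGroup.y v = v) : v ∈ ρ.invariants := by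
  let K : Subgroup (KnotGroup p q a) :=
    { carrier := {g | ρ g v = v}
      one_mem' := by simp
      mul_mem' := by
        intro g g' hg hg'
        rw [Set.mem_ofPred_eq] at *
        rw [map_mul, Module.End.mul_apply, hg', hg]
      inv_mem' := by
        intro g hg
        rw [Set.mem_ofPred_eq] at *
        nth_rewrite 1 [← hg]
        simp }
  have hK : K = ⊤ := KnotGroup.closure_eq_top K hx hy (by simp [K, hh])
  intro g
  have : g ∈ K := hK ▸ Subgroup.mem_top g
  exact this

/-- A cocycle vanishes at `h`, since its value there is an invariant vector. -/
theorem cocycle_h (hh : ρ KnotGroup.h = 1) (hinv : ρ.invariants = ⊥)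
    (c : cocycles₁ (Rep.of ρ)) : c KnotGroup.h = 0 := by
  have key : ∀ g : KnotGroup p q a, KnotGroup.h * g = g * KnotGroup.h →
      ρ g (c KnotGroup.h) = c KnotGroup.h := by
    intro g hg
    have h1 := (mem_cocycles₁_iff c).1 c.2 KnotGroup.h g
    have h2 := (mem_cocycles₁_iff c).1 c.2 g KnotGroup.h
    rw [hg, h2, Rep.of_ρ, hh, Module.End.one_apply, add_comm] at h1
    exact add_left_cancel h1
  have : (c KnotGroup.h : V) ∈ ρ.invariants :=
    mem_invariants_of_generators ρ hh (key _ KnotGroup.h_mul_x) (key _ KnotGroup.h_mul_y)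
  rw [hinv] at this
  exact this

/-- Any pair of vectors killed by the norm operators of `x` and `y` extends to a cocycle,
read off as the translation part of an affine action in which `h` acts trivially. -/
theorem exists_cocycle (hh : ρ KnotGroup.h = 1) (hx : ρ KnotGroup.x ^ p = 1)
    (hy : ρ KnotGroup.y ^ q = 1) {v w : V} (hv : normOp (ρ KnotGroup.x) p v = 0)
    (hw : normOp (ρ KnotGroup.y) q w = 0) :
    ∃ c : cocycles₁ (Rep.of ρ), c KnotGroup.x = v ∧ c KnotGroup.y = w := by
  let F : Fin 3 → Equiv.Perm V :=
    ![affinePerm ρ KnotGroup.x v, affinePerm ρ KnotGroup.y w, 1]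
  have hF : ∀ r ∈ knotRels p q a, FreeGroup.lift F r = 1 := by
    have hFx : affinePerm ρ KnotGroup.x v ^ p = 1 := by
      ext u; simp [affinePerm_pow, hx, hv]
    have hFy : affinePerm ρ KnotGroup.y w ^ q = 1 := by
      ext u; simp [affinePerm_pow, hy, hw]
    rintro r (rfl | rfl | rfl | rfl) <;> simp [F, hFx, hFy]
  let f : KnotGroup p q a →* Equiv.Perm V := PresentedGroup.toGroup hF
  have fx : f KnotGroup.x = affinePerm ρ KnotGroup.x v := PresentedGroup.toGroup.of hF
  have fy : f KnotGroup.y = affinePerm ρ KnotGroup.y w := PresentedGroup.toGroup.of hF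
  have fh : f KnotGroup.h = 1 := PresentedGroup.toGroup.of hF
  let K : Subgroup (KnotGroup p q a) :=
    { carrier := {g | ∀ u, f g u = ρ g u + f g 0}
      one_mem' := by intro u; simp
      mul_mem' := by
        intro g g' hg hg' u
        rw [map_mul, map_mul, Equiv.Perm.mul_apply, Equiv.Perm.mul_apply, hg (f g' u), hg' u,
          hg (f g' 0), Module.End.mul_apply, map_add, add_assoc]
      inv_mem' := by
        intro g hg u
        have hcancel : ∀ u, f g (f g⁻¹ u) = u := by
          intro u
          rw [← Equiv.Perm.mul_apply, ← map_mul, mul_inv_cancel, map_one, Equiv.Perm.one_apply]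
        apply (f g).injective
        rw [hg (ρ g⁻¹ u + f g⁻¹ 0), hcancel, map_add, add_assoc, ← hg, hcancel]
        simp }
  have hK : K = ⊤ := by
    apply KnotGroup.closure_eq_top
    · intro u; rw [fx]; simp [affinePerm]
    · intro u; rw [fy]; simp [affinePerm]
    · intro u; rw [fh]; simp [hh]
  have haff : ∀ g u, f g u = ρ g u + f g 0 := fun g ↦ by
    have : g ∈ K := hK ▸ Subgroup.mem_top g
    exact this
  refine ⟨⟨fun g ↦ f g 0, (mem_cocycles₁_iff (A := Rep.of ρ) _).2 ?_⟩, ?_, ?_⟩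
  · intro g g'
    rw [map_mul, Equiv.Perm.mul_apply, haff g]
  · change f KnotGroup.x 0 = v
    rw [fx]; simp [affinePerm]
  · change f KnotGroup.y 0 = w
    rw [fy]; simp [affinePerm]

/-- Evaluation of cocycles at the generators `x` and `y`. -/
def evalXY : cocycles₁ (Rep.of ρ) →ₗ[ℝ] V × V where
  toFun c := (c KnotGroup.x, c KnotGroup.y)
  map_add' _ _ := rfl
  map_smul' _ _ := rfl

theorem evalXY_injective (hh : ρ KnotGroup.h = 1) (hinv : ρ.invariants = ⊥) :
    Function.Injective (evalXY ρ) := by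
  rw [← LinearMap.ker_eq_bot, LinearMap.ker_eq_bot']
  intro c hc
  have hK := KnotGroup.closure_eq_top (cocycleZeros c) (congrArg Prod.fst hc)
    (congrArg Prod.snd hc) (cocycle_h ρ hh hinv c)
  apply cocycles₁_ext
  intro g
  have : g ∈ cocycleZeros c := hK ▸ Subgroup.mem_top g
  exact this

theorem range_evalXY (hh : ρ KnotGroup.h = 1) (hx : ρ KnotGroup.x ^ p = 1)
    (hy : ρ KnotGroup.y ^ q = 1) (hinv : ρ.invariants = ⊥) :
    LinearMap.range (evalXY ρ) = (LinearMap.ker (normOp (ρ KnotGroup.x) p)).prod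
      (LinearMap.ker (normOp (ρ KnotGroup.y) q)) := by
  ext ⟨v, w⟩
  rw [Submodule.mem_prod, LinearMap.mem_ker, LinearMap.mem_ker]
  constructor
  · rintro ⟨c, hc⟩
    have hca : c (KnotGroup.h ^ a) = 0 :=
      (cocycleZeros c).zpow_mem (cocycle_h ρ hh hinv c) a
    obtain rfl : c KnotGroup.x = v := congrArg Prod.fst hc
    obtain rfl : c KnotGroup.y = w := congrArg Prod.snd hc
    constructor
    · change normOp (ρ KnotGroup.x) p (c KnotGroup.x) = 0
      rw [← cocycle_pow c KnotGroup.x p, KnotGroup.x_pow, hca]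
    · change normOp (ρ KnotGroup.y) q (c KnotGroup.y) = 0
      rw [← cocycle_pow c KnotGroup.y q, KnotGroup.y_pow, hca]
  · rintro ⟨hv, hw⟩
    obtain ⟨c, h1, h2⟩ := exists_cocycle ρ hh hx hy hv hw
    exact ⟨c, Prod.ext h1 h2⟩

/-- The dimension count for `H¹`: cocycles are pairs in the kernels of the two norm operators,
and coboundaries form a copy of `V`. -/
theorem finrank_H1_add [FiniteDimensional ℝ V] (hp : 0 < p) (hq : 0 < q)
    (hh : ρ KnotGroup.h = 1) (hx : ρ KnotGroup.x ^ p = 1)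
    (hy : ρ KnotGroup.y ^ q = 1) (hinv : ρ.invariants = ⊥) :
    Module.finrank ℝ (H1 (Rep.of ρ)) + Module.finrank ℝ (LinearMap.ker (ρ KnotGroup.x - 1))
      + Module.finrank ℝ (LinearMap.ker (ρ KnotGroup.y - 1)) = Module.finrank ℝ V := by
  have hinj := evalXY_injective ρ hh hinv
  have : FiniteDimensional ℝ (cocycles₁ (Rep.of ρ)) :=
    FiniteDimensional.of_injective (evalXY ρ) hinj
  have hZ : Module.finrank ℝ (cocycles₁ (Rep.of ρ)) =
      Module.finrank ℝ (LinearMap.ker (normOp (ρ KnotGroup.x) p)) +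
      Module.finrank ℝ (LinearMap.ker (normOp (ρ KnotGroup.y) q)) := by
    rw [← LinearMap.finrank_range_of_inj hinj, range_evalXY ρ hh hx hy hinv,
      finrank_submodule_prod]
  let B : V →ₗ[ℝ] cocycles₁ (Rep.of ρ) :=
    (d₀₁ (Rep.of ρ)).hom.codRestrict _ (fun v ↦ d₀₁_apply_mem_cocycles₁ (A := Rep.of ρ) v)
  have hB : Function.Injective B := by
    rw [← LinearMap.ker_eq_bot, LinearMap.ker_codRestrict, d₀₁_ker_eq_invariants]
    exact hinv
  have hker : LinearMap.ker (H1π (Rep.of ρ)).hom = LinearMap.range B := by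
    ext c
    rw [LinearMap.mem_ker]
    refine (H1π_eq_zero_iff (A := Rep.of ρ) c).trans ?_
    constructor
    · rintro ⟨v, hv⟩
      exact ⟨v, Subtype.ext hv⟩
    · rintro ⟨v, rfl⟩
      exact ⟨v, rfl⟩
  have hsurj : LinearMap.range (H1π (Rep.of ρ)).hom = ⊤ :=
    LinearMap.range_eq_top.2 ((ModuleCat.epi_iff_surjective _).1 inferInstance)
  have h1 := LinearMap.finrank_range_add_finrank_ker (H1π (Rep.of ρ)).hom
  rw [hsurj, finrank_top, hker, LinearMap.finrank_range_of_inj hB] at h1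
  have h2 := finrank_ker_normOp _ p hp hx
  have h3 := finrank_ker_normOp _ q hq hy
  change _ = Module.finrank ℝ (cocycles₁ (Rep.of ρ)) at h1
  change Module.finrank ℝ (H1 (Rep.of ρ)) + _ = _ at h1
  omega

end Cocycles

/-! ### Unitary matrices of finite order modulo scalars -/

section Diagonalization

open Matrix

/-- `b` is an orthonormal eigenbasis of the matrix `A`, with eigenvalues `d`. -/
def IsEigenbasis (A : Matrix (Fin 3) (Fin 3) ℂ)
    (b : OrthonormalBasis (Fin 3) ℂ (EuclideanSpace ℂ (Fin 3))) (d : Fin 3 → ℂ) : Prop :=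
  ∀ i, A *ᵥ (b i).ofLp = d i • (b i).ofLp

theorem exists_isEigenbasis (A : Matrix (Fin 3) (Fin 3) ℂ) (hA : A ∈ unitaryGroup (Fin 3) ℂ)
    (n : ℕ) (hn : 0 < n) (c : ℂ) (hc : c ≠ 0) (hpow : A ^ n = c • (1 : Matrix _ _ ℂ)) :
    ∃ b d, IsEigenbasis A b d := by
  let T : Module.End ℂ (EuclideanSpace ℂ (Fin 3)) := toEuclideanLin A
  have hT : ∀ v, T v = WithLp.toLp 2 (A *ᵥ v.ofLp) := fun v ↦ rfl
  have hTpow : ∀ (k : ℕ) v, (T ^ k) v = WithLp.toLp 2 ((A ^ k) *ᵥ v.ofLp) := by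
    intro k
    induction k with
    | zero => simp
    | succ k ih => intro v; rw [pow_succ, Module.End.mul_apply, ih, hT, pow_succ]; simp
  have hss : T.IsSemisimple := by
    refine Module.End.isSemisimple_of_squarefree_aeval_eq_zero
      (p := Polynomial.X ^ n - Polynomial.C c) ?_ ?_
    · exact (Polynomial.separable_X_pow_sub_C c (by exact_mod_cast hn.ne') hc).squarefree
    · ext1 v
      simp [hTpow, hpow, smul_mulVec, Algebra.algebraMap_eq_smul_one]
  have hinner : ∀ v w, inner ℂ (T v) (T w) = inner ℂ v w := by
    intro v w
    rw [hT, hT, EuclideanSpace.inner_eq_star_dotProduct, EuclideanSpace.inner_eq_star_dotProduct]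
    have h1 : star A * A = 1 := hA.1
    rw [star_mulVec, dotProduct_comm, ← dotProduct_mulVec, mulVec_mulVec,
      ← star_eq_conjTranspose, h1, one_mulVec, dotProduct_comm]
  have htop : ⨆ μ : ℂ, T.eigenspace μ = ⊤ := by
    rw [← Module.End.iSup_maxGenEigenspace_eq_top T]
    congr 1
    ext1 μ
    rw [hss.isFinitelySemisimple.maxGenEigenspace_eq_eigenspace]
  have hzero : ∀ {μ : ℂ} {v}, T v = μ • v → v ≠ 0 → star μ * μ = 1 := by
    intro μ v hv hv0
    have := hinner v v
    rw [hv, inner_smul_left, inner_smul_right, ← mul_assoc] at this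
    exact mul_eq_right₀ (inner_self_ne_zero.2 hv0) |>.1 this
  have horth : OrthogonalFamily ℂ (fun μ : Module.End.Eigenvalues T ↦ T.eigenspace μ)
      fun μ ↦ (T.eigenspace μ).subtypeₗᵢ := by
    rintro μ ν hμν ⟨v, hv⟩ ⟨w, hw⟩
    rw [Module.End.mem_eigenspace_iff] at hv hw
    change inner ℂ v w = 0
    by_contra h0
    have hv0 : v ≠ 0 := by rintro rfl; simp at h0
    have h1 := hinner v w
    rw [hv, hw, inner_smul_left, inner_smul_right, ← mul_assoc] at h1
    have h2 := mul_eq_right₀ h0 |>.1 h1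
    have h3 := hzero hv hv0
    apply hμν
    apply Subtype.ext
    have h4 : star (μ : ℂ) ≠ 0 := left_ne_zero_of_mul_eq_one h3
    exact mul_left_cancel₀ h4 (h3.trans h2.symm)
  have hInternal : DirectSum.IsInternal (fun μ : Module.End.Eigenvalues T ↦ T.eigenspace μ) := by
    rw [horth.isInternal_iff, Submodule.orthogonal_eq_bot_iff, eq_top_iff, ← htop]
    apply iSup_le
    intro μ
    by_cases hμ : T.HasEigenvalue μ
    · exact le_iSup (fun μ : Module.End.Eigenvalues T ↦ T.eigenspace μ) ⟨μ, hμ⟩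
    · rw [Module.End.hasEigenvalue_iff, not_not] at hμ
      rw [hμ]; exact bot_le
  have hfr : Module.finrank ℂ (EuclideanSpace ℂ (Fin 3)) = 3 := by simp
  refine ⟨hInternal.subordinateOrthonormalBasis hfr horth,
    fun i ↦ (hInternal.subordinateOrthonormalBasisIndex hfr i horth : Module.End.Eigenvalues T),
    fun i ↦ ?_⟩
  have := hInternal.subordinateOrthonormalBasis_subordinate hfr i horth
  rw [Module.End.mem_eigenspace_iff, hT] at this
  exact congrArg WithLp.ofLp this

/-- An eigenbasis can be ordered so that coinciding eigenvalues come first. -/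
theorem exists_sorted_isEigenbasis {A : Matrix (Fin 3) (Fin 3) ℂ}
    (h : ∃ b d, IsEigenbasis A b d) :
    ∃ b d, IsEigenbasis A b d ∧ (Function.Injective d ∨ (d 0 = d 1 ∧ d 1 ≠ d 2) ∨
      (d 0 = d 1 ∧ d 1 = d 2)) := by
  obtain ⟨b, d, hbd⟩ := h
  have key : ∀ σ : Equiv.Perm (Fin 3), IsEigenbasis A (b.reindex σ.symm) (d ∘ σ) := by
    intro σ i
    simpa using hbd (σ i)
  by_cases h01 : d 0 = d 1
  · by_cases h12 : d 1 = d 2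
    · exact ⟨b, d, hbd, .inr (.inr ⟨h01, h12⟩)⟩
    · exact ⟨b, d, hbd, .inr (.inl ⟨h01, h12⟩)⟩
  · by_cases h12 : d 1 = d 2
    · exact ⟨_, _, key (Equiv.swap 0 2), .inr (.inl
        ⟨by simp [Equiv.swap_apply_def, h12], by simpa [Equiv.swap_apply_def] using Ne.symm h01⟩)⟩
    · by_cases h02 : d 0 = d 2
      · exact ⟨_, _, key (Equiv.swap 1 2), .inr (.inl
          ⟨by simp [Equiv.swap_apply_def, h02], by simpa [Equiv.swap_apply_def] using Ne.symm h12⟩)⟩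
      · refine ⟨b, d, hbd, .inl ?_⟩
        intro i j hij
        fin_cases i <;> fin_cases j <;> simp_all

variable {A : Matrix (Fin 3) (Fin 3) ℂ}
  {b : OrthonormalBasis (Fin 3) ℂ (EuclideanSpace ℂ (Fin 3))} {d : Fin 3 → ℂ}

/-- The matrix whose columns are the vectors of an orthonormal basis. -/
noncomputable def basisMatrix (b : OrthonormalBasis (Fin 3) ℂ (EuclideanSpace ℂ (Fin 3))) :
    Matrix (Fin 3) (Fin 3) ℂ := Matrix.of fun i j ↦ b j i

theorem star_basisMatrix_mul : star (basisMatrix b) * basisMatrix b = 1 := by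
  ext i j
  have := b.inner_eq_ite i j
  rw [EuclideanSpace.inner_eq_star_dotProduct, dotProduct_comm] at this
  rw [Matrix.one_apply, ← this]
  rfl

theorem basisMatrix_mul_star : basisMatrix b * star (basisMatrix b) = 1 :=
  mul_eq_one_comm.1 star_basisMatrix_mul

theorem IsEigenbasis.mul_basisMatrix (h : IsEigenbasis A b d) :
    A * basisMatrix b = basisMatrix b * diagonal d := by
  ext i j
  have := congrFun (h j) i
  rw [mul_diagonal]
  simp only [Pi.smul_apply, smul_eq_mul] at this
  rw [mul_comm]
  exact this

theorem IsEigenbasis.eq_conj (h : IsEigenbasis A b d) :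
    A = basisMatrix b * diagonal d * star (basisMatrix b) := by
  rw [← h.mul_basisMatrix, mul_assoc, basisMatrix_mul_star, mul_one]

theorem IsEigenbasis.spectrum_eq (h : IsEigenbasis A b d) : spectrum ℂ A = Set.range d := by
  let u : (Matrix (Fin 3) (Fin 3) ℂ)ˣ :=
    ⟨basisMatrix b, star (basisMatrix b), basisMatrix_mul_star, star_basisMatrix_mul⟩
  have : A = u * diagonal d * (u⁻¹ : (Matrix (Fin 3) (Fin 3) ℂ)ˣ) := h.eq_conj
  rw [this, spectrum.units_conjugate, spectrum_diagonal]

theorem IsEigenbasis.ncard_spectrum_eq_three_iff (h : IsEigenbasis A b d) :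
    (spectrum ℂ A).ncard = 3 ↔ Function.Injective d := by
  rw [h.spectrum_eq, ← Set.image_univ, ← Set.injOn_univ]
  constructor
  · intro hc
    apply Set.injOn_of_ncard_image_eq _ Set.finite_univ
    rw [hc]; simp [Set.ncard_univ]
  · intro hi
    rw [hi.ncard_image]; simp [Set.ncard_univ]

end Diagonalization

/-! ### Dimensions of centralizers in `su(3)` -/

section Centralizers

open Matrix

/-- The centralizer of the matrix `A` in `su(3)`. -/
noncomputable def su3Centralizer (A : Matrix (Fin 3) (Fin 3) ℂ) :
    Submodule ℝ (Matrix (Fin 3) (Fin 3) ℂ) where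
  carrier := {X | X ∈ su3 ∧ A * X = X * A}
  add_mem' := by
    rintro X Y ⟨hX, hX'⟩ ⟨hY, hY'⟩
    exact ⟨su3.add_mem hX hY, by rw [mul_add, add_mul, hX', hY']⟩
  zero_mem' := ⟨su3.zero_mem, by simp⟩
  smul_mem' := by
    rintro r X ⟨hX, hX'⟩
    exact ⟨su3.smul_mem r hX, by rw [mul_smul_comm, hX', smul_mul_assoc]⟩

theorem conj_mem_su3 {U X : Matrix (Fin 3) (Fin 3) ℂ} (hU : star U * U = 1) (hX : X ∈ su3) :
    U * X * star U ∈ su3 := by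
  obtain ⟨h1, h2⟩ := hX
  constructor
  · rw [star_eq_conjTranspose, conjTranspose_mul, conjTranspose_mul, conjTranspose_conjTranspose,
      h1]
    simp [mul_assoc]
  · rw [trace_mul_cycle, hU, one_mul, h2]

/-- Conjugation `X ↦ U X U*` by a unitary matrix `U`. -/
noncomputable def conjEquiv (U : Matrix (Fin 3) (Fin 3) ℂ) (h1 : star U * U = 1)
    (h2 : U * star U = 1) :
    Matrix (Fin 3) (Fin 3) ℂ ≃ₗ[ℝ] Matrix (Fin 3) (Fin 3) ℂ where
  toFun X := U * X * star U
  invFun X := star U * X * U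
  map_add' X Y := by rw [mul_add, add_mul]
  map_smul' r X := by simp
  left_inv X := by
    change star U * (U * X * star U) * U = X
    rw [mul_assoc U, ← mul_assoc (star U), h1, one_mul, mul_assoc, h1, mul_one]
  right_inv X := by
    change U * (star U * X * U) * star U = X
    rw [mul_assoc (star U), ← mul_assoc U, h2, one_mul, mul_assoc, h2, mul_one]

theorem map_conj_su3Centralizer (U D : Matrix (Fin 3) (Fin 3) ℂ) (h1 : star U * U = 1)
    (h2 : U * star U = 1) :
    (su3Centralizer D).map (conjEquiv U h1 h2).toLinearMap = su3Centralizer (U * D * star U) := by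
  have hmul : ∀ X Y, conjEquiv U h1 h2 (X * Y) = conjEquiv U h1 h2 X * conjEquiv U h1 h2 Y := by
    intro X Y
    change U * (X * Y) * star U = U * X * star U * (U * Y * star U)
    rw [mul_assoc U Y, mul_assoc (U * X), ← mul_assoc (star U), h1, one_mul]
    simp only [mul_assoc]
  ext X
  constructor
  · rintro ⟨Y, ⟨hY, hY'⟩, rfl⟩
    refine ⟨conj_mem_su3 h1 hY, ?_⟩
    change conjEquiv U h1 h2 D * conjEquiv U h1 h2 Y = conjEquiv U h1 h2 Y * conjEquiv U h1 h2 D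
    rw [← hmul, hY', hmul]
  · rintro ⟨hX, hX'⟩
    obtain ⟨Y, rfl⟩ := (conjEquiv U h1 h2).surjective X
    refine ⟨Y, ⟨?_, ?_⟩, rfl⟩
    · have := conj_mem_su3 (U := star U) (by rw [star_star]; exact h2) hX
      rw [star_star] at this
      rwa [← (conjEquiv U h1 h2).symm_apply_apply Y]
    · apply (conjEquiv U h1 h2).injective
      rw [hmul, hmul]
      exact hX'

theorem IsEigenbasis.finrank_su3Centralizer {A : Matrix (Fin 3) (Fin 3) ℂ}
    {b : OrthonormalBasis (Fin 3) ℂ (EuclideanSpace ℂ (Fin 3))} {d : Fin 3 → ℂ}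
    (h : IsEigenbasis A b d) :
    Module.finrank ℝ (su3Centralizer A) = Module.finrank ℝ (su3Centralizer (diagonal d)) := by
  rw [h.eq_conj, ← map_conj_su3Centralizer _ _ star_basisMatrix_mul basisMatrix_mul_star]
  exact LinearEquiv.finrank_map_eq (conjEquiv _ star_basisMatrix_mul basisMatrix_mul_star) _

theorem mem_su3Centralizer_diagonal_iff {d : Fin 3 → ℂ} {X : Matrix (Fin 3) (Fin 3) ℂ} :
    X ∈ su3Centralizer (diagonal d) ↔ X ∈ su3 ∧ ∀ i j, d i ≠ d j → X i j = 0 := by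
  refine and_congr_right fun _ ↦ ?_
  rw [← Matrix.ext_iff]
  refine forall₂_congr fun i j ↦ ?_
  rw [diagonal_mul, mul_diagonal, mul_comm (X i j), ← sub_eq_zero, ← sub_mul, mul_eq_zero,
    sub_eq_zero]
  tauto

/-- The matrix in `su(3)` with given real coordinates: the imaginary parts of the first two diagonal
entries, then the real and imaginary parts of the entries `01`, `02`, `12`. In this order the
centralizers of sorted diagonal matrices are cut out by the vanishing of the last coordinates. -/
noncomputable def su3Coords : (Fin 8 → ℝ) →ₗ[ℝ] Matrix (Fin 3) (Fin 3) ℂ where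
  toFun t := !![⟨0, t 0⟩, ⟨t 2, t 3⟩, ⟨t 4, t 5⟩;
                ⟨-t 2, t 3⟩, ⟨0, t 1⟩, ⟨t 6, t 7⟩;
                ⟨-t 4, t 5⟩, ⟨-t 6, t 7⟩, ⟨0, -t 0 - t 1⟩]
  map_add' s t := by
    ext i j
    fin_cases i <;> fin_cases j <;> apply Complex.ext <;> simp <;> ring
  map_smul' r t := by
    ext i j
    fin_cases i <;> fin_cases j <;> apply Complex.ext <;> simp <;> ring

theorem su3Coords_injective : Function.Injective su3Coords := by
  rw [← LinearMap.ker_eq_bot, LinearMap.ker_eq_bot']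
  intro t ht
  have h := fun i j ↦ congrFun (congrFun ht i) j
  have h00 := h 0 0
  have h11 := h 1 1
  have h01 := h 0 1
  have h02 := h 0 2
  have h12 := h 1 2
  simp [su3Coords, Complex.ext_iff] at h00 h11 h01 h02 h12
  ext i
  fin_cases i <;> simp [h00, h11, h01, h02, h12]

theorem range_su3Coords : LinearMap.range su3Coords = su3 := by
  ext X
  constructor
  · rintro ⟨t, rfl⟩
    constructor
    · ext i j
      fin_cases i <;> fin_cases j <;> apply Complex.ext <;> simp [su3Coords]
    · apply Complex.ext <;> simp [su3Coords, trace_fin_three]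
  · rintro ⟨h1, h2⟩
    refine ⟨![(X 0 0).im, (X 1 1).im, (X 0 1).re, (X 0 1).im, (X 0 2).re, (X 0 2).im,
      (X 1 2).re, (X 1 2).im], ?_⟩
    have h := fun i j ↦ congrFun (congrFun h1 i) j
    simp only [conjTranspose_apply, Matrix.neg_apply, Complex.ext_iff] at h
    rw [trace_fin_three, Complex.ext_iff] at h2
    simp at h h2
    ext i j
    fin_cases i <;> fin_cases j <;> apply Complex.ext <;> simp [su3Coords] <;>
      linarith [h 0 0, h 0 1, h 0 2, h 1 1, h 1 2, h 2 2]

theorem finrank_su3 : Module.finrank ℝ su3 = 8 := by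
  rw [← range_su3Coords, LinearMap.finrank_range_of_inj su3Coords_injective]
  simp

instance : FiniteDimensional ℝ su3 :=
  Module.finite_of_finrank_pos (by rw [finrank_su3]; norm_num)

/-- Extension by zero of a vector with `k` coordinates to one with eight. -/
def extendZero (k : ℕ) : (Fin k → ℝ) →ₗ[ℝ] (Fin 8 → ℝ) where
  toFun t i := if h : (i : ℕ) < k then t ⟨i, h⟩ else 0
  map_add' s t := by
    ext i
    by_cases h : (i : ℕ) < k <;> simp [h]
  map_smul' r t := by
    ext i
    by_cases h : (i : ℕ) < k <;> simp [h]

/-- The subspace of `su(3)` on which only the first `k` coordinates may be nonzero has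
dimension `k`. -/
theorem finrank_of_coords {k : ℕ} (hk : k ≤ 8) {S : Submodule ℝ (Matrix (Fin 3) (Fin 3) ℂ)}
    (hS : S ≤ su3) (h : ∀ t, su3Coords t ∈ S ↔ ∀ i : Fin 8, k ≤ i → t i = 0) :
    Module.finrank ℝ S = k := by
  have hinj : Function.Injective (extendZero k) := by
    intro s t hst
    ext i
    have := congrFun hst ⟨i, i.2.trans_le hk⟩
    simpa [extendZero] using this
  have hrange : LinearMap.range (su3Coords ∘ₗ extendZero k) = S := by
    ext X
    constructor
    · rintro ⟨t, rfl⟩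
      refine (h _).2 fun i hi ↦ ?_
      simp [extendZero, hi]
    · intro hX
      obtain ⟨t, rfl⟩ : X ∈ LinearMap.range su3Coords := range_su3Coords ▸ hS hX
      refine ⟨fun i ↦ t ⟨i, i.2.trans_le hk⟩, congrArg su3Coords ?_⟩
      ext i
      by_cases hi : (i : ℕ) < k
      · simp [extendZero, hi]
      · simp [extendZero, hi, (h t).1 hX i (not_lt.1 hi)]
  rw [← hrange, LinearMap.finrank_range_of_inj (f := su3Coords ∘ₗ extendZero k)
    (su3Coords_injective.comp hinj)]
  simp

theorem su3Coords_mem (t : Fin 8 → ℝ) : su3Coords t ∈ su3 :=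
  range_su3Coords ▸ LinearMap.mem_range_self _ t

theorem finrank_su3Centralizer_of_injective {d : Fin 3 → ℂ} (hd : Function.Injective d) :
    Module.finrank ℝ (su3Centralizer (diagonal d)) = 2 := by
  refine finrank_of_coords (by norm_num) (fun X hX ↦ hX.1) fun t ↦ ?_
  rw [mem_su3Centralizer_diagonal_iff, and_iff_right (su3Coords_mem t)]
  constructor
  · intro h
    have h01 := h 0 1 (hd.ne (by decide))
    have h02 := h 0 2 (hd.ne (by decide))
    have h12 := h 1 2 (hd.ne (by decide))
    simp [su3Coords, Complex.ext_iff] at h01 h02 h12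
    intro i hi
    fin_cases i <;> simp_all
  · intro h i j hij
    have h2 := h 2 (by decide)
    have h3 := h 3 (by decide)
    have h4 := h 4 (by decide)
    have h5 := h 5 (by decide)
    have h6 := h 6 (by decide)
    have h7 := h 7 (by decide)
    fin_cases i <;> fin_cases j <;> simp [su3Coords, Complex.ext_iff, *] at hij ⊢

theorem finrank_su3Centralizer_of_two {d : Fin 3 → ℂ} (h01 : d 0 = d 1) (h12 : d 1 ≠ d 2) :
    Module.finrank ℝ (su3Centralizer (diagonal d)) = 4 := by
  refine finrank_of_coords (by norm_num) (fun X hX ↦ hX.1) fun t ↦ ?_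
  rw [mem_su3Centralizer_diagonal_iff, and_iff_right (su3Coords_mem t)]
  constructor
  · intro h
    have h02 := h 0 2 (h01 ▸ h12)
    have h12 := h 1 2 h12
    simp [su3Coords, Complex.ext_iff] at h02 h12
    intro i hi
    fin_cases i <;> simp_all
  · intro h i j hij
    have h4 := h 4 (by decide)
    have h5 := h 5 (by decide)
    have h6 := h 6 (by decide)
    have h7 := h 7 (by decide)
    fin_cases i <;> fin_cases j <;> simp [su3Coords, Complex.ext_iff, *] at hij ⊢

end Centralizers

/-! ### Irreducible representations -/

section Irreducible

open Matrix

variable {G : Type} [Group G] {α : G →* SU 3}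

theorem matSU_mem_unitary (α : G →* SU 3) (g : G) : matSU (α g) ∈ unitaryGroup (Fin 3) ℂ :=
  (α g).val.prop

theorem matSU_map_mul (α : G →* SU 3) (g g' : G) :
    matSU (α (g * g')) = matSU (α g) * matSU (α g') := by
  rw [map_mul]; rfl

theorem matSU_map_one (α : G →* SU 3) : matSU (α 1) = 1 := by
  rw [map_one]; rfl

theorem matSU_map_pow (α : G →* SU 3) (g : G) (n : ℕ) :
    matSU (α (g ^ n)) = matSU (α g) ^ n := by
  induction n with
  | zero => simp
  | succ n ih => rw [pow_succ, matSU_map_mul, ih, pow_succ]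

theorem coe_adjRep (α : G →* SU 3) (g : G) (X : su3) :
    (adjRep α g X : Matrix (Fin 3) (Fin 3) ℂ) = matSU (α g) * X * star (matSU (α g)) := rfl

theorem adjRep_eq_self_iff (α : G →* SU 3) (g : G) (X : su3) :
    adjRep α g X = X ↔ matSU (α g) * X = X * matSU (α g) := by
  have h1 : star (matSU (α g)) * matSU (α g) = 1 := (matSU_mem_unitary α g).1
  have h2 : matSU (α g) * star (matSU (α g)) = 1 := (matSU_mem_unitary α g).2
  rw [Subtype.ext_iff, coe_adjRep]
  constructor
  · intro h
    nth_rewrite 2 [← h]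
    rw [mul_assoc, h1, mul_one]
  · intro h
    rw [h, mul_assoc, h2, mul_one]

theorem finrank_ker_adjRep (α : G →* SU 3) (g : G) :
    Module.finrank ℝ (LinearMap.ker (adjRep α g - 1)) =
      Module.finrank ℝ (su3Centralizer (matSU (α g))) := by
  have hiff : ∀ Y : su3, Y ∈ LinearMap.ker (adjRep α g - 1) ↔
      matSU (α g) * Y = Y * matSU (α g) := by
    intro Y
    rw [← adjRep_eq_self_iff, LinearMap.mem_ker, LinearMap.sub_apply, sub_eq_zero,
      Module.End.one_apply]
  have hmap : (LinearMap.ker (adjRep α g - 1)).map su3.subtype =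
      su3Centralizer (matSU (α g)) := by
    ext X
    constructor
    · rintro ⟨Y, hY, rfl⟩
      exact ⟨Y.2, (hiff Y).1 hY⟩
    · rintro ⟨hX, hX'⟩
      exact ⟨⟨X, hX⟩, (hiff ⟨X, hX⟩).2 hX', rfl⟩
  rw [← hmap, Submodule.finrank_map_subtype_eq]

/-- Schur's lemma. -/
theorem IsIrrep.eq_smul_one (hirr : IsIrrep α) {M : Matrix (Fin 3) (Fin 3) ℂ}
    (hM : ∀ g, matSU (α g) * M = M * matSU (α g)) : ∃ μ : ℂ, M = μ • (1 : Matrix _ _ ℂ) := by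
  obtain ⟨μ, hμ⟩ := Module.End.exists_eigenvalue (Matrix.toLin' M)
  refine ⟨μ, ?_⟩
  have hW := hirr (Module.End.eigenspace (Matrix.toLin' M) μ) (by
    intro g v hv
    rw [Module.End.mem_eigenspace_iff, toLin'_apply] at hv ⊢
    rw [mulVec_mulVec, ← hM, ← mulVec_mulVec, hv, mulVec_smul])
  have htop := hW.resolve_left hμ
  apply Matrix.toLin'.injective
  ext1 i
  ext1
  have : Pi.single i 1 ∈ Module.End.eigenspace (Matrix.toLin' M) μ := htop ▸ Submodule.mem_top
  rw [Module.End.mem_eigenspace_iff] at this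
  simpa using this

/-- The elements `g` for which `v` is an eigenvector of `α g`. -/
def eigenvectorStabilizer (α : G →* SU 3) (v : Fin 3 → ℂ) : Subgroup G where
  carrier := {g | ∃ μ : ℂ, μ ≠ 0 ∧ matSU (α g) *ᵥ v = μ • v}
  one_mem' := ⟨1, one_ne_zero, by rw [matSU_map_one, one_mulVec, one_smul]⟩
  mul_mem' := by
    rintro g g' ⟨μ, h0, hμ⟩ ⟨ν, h0', hν⟩
    exact ⟨ν * μ, mul_ne_zero h0' h0, by
      rw [matSU_map_mul, ← mulVec_mulVec, hν, mulVec_smul, hμ, smul_smul]⟩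
  inv_mem' := by
    rintro g ⟨μ, h0, hμ⟩
    refine ⟨μ⁻¹, inv_ne_zero h0, ?_⟩
    have : matSU (α g⁻¹) *ᵥ (matSU (α g) *ᵥ v) = v := by
      rw [mulVec_mulVec, ← matSU_map_mul, inv_mul_cancel, matSU_map_one, one_mulVec]
    rw [hμ, mulVec_smul] at this
    nth_rewrite 2 [← this]
    rw [smul_smul, inv_mul_cancel₀ h0, one_smul]

theorem mem_eigenvectorStabilizer {v : Fin 3 → ℂ} (hv : v ≠ 0) {g : G} {μ : ℂ}
    (h : matSU (α g) *ᵥ v = μ • v) : g ∈ eigenvectorStabilizer α v := by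
  refine ⟨μ, ?_, h⟩
  rintro rfl
  rw [zero_smul] at h
  apply hv
  rw [← one_mulVec v, ← matSU_map_one α, ← inv_mul_cancel g, matSU_map_mul, ← mulVec_mulVec, h,
    mulVec_zero]

theorem IsIrrep.eigenvectorStabilizer_ne_top (hirr : IsIrrep α) {v : Fin 3 → ℂ} (hv : v ≠ 0) :
    eigenvectorStabilizer α v ≠ ⊤ := by
  intro htop
  have hW := hirr (Submodule.span ℂ {v}) (by
    intro g w hw
    obtain ⟨c, rfl⟩ := Submodule.mem_span_singleton.1 hw
    obtain ⟨μ, -, hμ⟩ : g ∈ eigenvectorStabilizer α v := htop ▸ Subgroup.mem_top g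
    rw [mulVec_smul, hμ]
    exact Submodule.smul_mem _ _ (Submodule.smul_mem _ _ (Submodule.mem_span_singleton_self v)))
  rcases hW with h | h
  · exact hv (Submodule.span_singleton_eq_bot.1 h)
  · have h1 := finrank_span_singleton (K := ℂ) hv
    rw [h, finrank_top] at h1
    simp at h1

theorem IsIrrep.invariants_eq_bot (hirr : IsIrrep α) : (adjRep α).invariants = ⊥ := by
  rw [eq_bot_iff]
  intro X hX
  obtain ⟨μ, hμ⟩ := hirr.eq_smul_one (M := X) fun g ↦ (adjRep_eq_self_iff α g X).1 (hX g)
  have htr := X.2.2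
  rw [hμ, trace_smul, trace_one] at htr
  have : μ = 0 := by simpa using htr
  rw [Submodule.mem_bot]
  apply Subtype.ext
  rw [hμ, this, zero_smul]
  rfl

theorem IsIrrep.central (hirr : IsIrrep α) {z : G} (hz : ∀ g, z * g = g * z) :
    ∃ μ : ℂ, μ ^ 3 = 1 ∧ matSU (α z) = μ • (1 : Matrix _ _ ℂ) := by
  obtain ⟨μ, hμ⟩ := hirr.eq_smul_one (M := matSU (α z)) fun g ↦ by
    rw [← matSU_map_mul, ← matSU_map_mul, hz]
  refine ⟨μ, ?_, hμ⟩
  have hdet : (matSU (α z)).det = 1 := (α z).prop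
  rw [hμ, det_smul, det_one] at hdet
  simpa using hdet

theorem IsIrrep.adjRep_central (hirr : IsIrrep α) {z : G} (hz : ∀ g, z * g = g * z) :
    adjRep α z = 1 := by
  obtain ⟨μ, -, hμ⟩ := hirr.central hz
  ext1 X
  rw [Module.End.one_apply, adjRep_eq_self_iff, hμ]
  simp

/-- The first two vectors of an eigenbasis with `d 0 = d 1` span a plane of eigenvectors; two
planes in `ℂ³` meet, which gives a common eigenvector of the two matrices. -/
theorem exists_common_eigenvector {A B : Matrix (Fin 3) (Fin 3) ℂ}
    {b b' : OrthonormalBasis (Fin 3) ℂ (EuclideanSpace ℂ (Fin 3))} {d d' : Fin 3 → ℂ}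
    (hA : IsEigenbasis A b d) (hB : IsEigenbasis B b' d') (hd : d 0 = d 1) (hd' : d' 0 = d' 1) :
    ∃ v : Fin 3 → ℂ, v ≠ 0 ∧ A *ᵥ v = d 0 • v ∧ B *ᵥ v = d' 0 • v := by
  have key : ∀ {A : Matrix (Fin 3) (Fin 3) ℂ}
      {b : OrthonormalBasis (Fin 3) ℂ (EuclideanSpace ℂ (Fin 3))} {d : Fin 3 → ℂ},
      IsEigenbasis A b d → d 0 = d 1 →
      2 ≤ Module.finrank ℂ (Module.End.eigenspace (Matrix.toLin' A) (d 0)) := by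
    intro A b d hA hd
    have hli : LinearIndependent ℂ (fun i ↦ (b i).ofLp) :=
      b.orthonormal.linearIndependent.map' (WithLp.linearEquiv 2 ℂ (Fin 3 → ℂ)).toLinearMap
        (LinearEquiv.ker _)
    have hli2 := hli.comp (Fin.castLE (by norm_num : 2 ≤ 3)) (Fin.castLE_injective _)
    have hmem : ∀ i : Fin 2, (b (Fin.castLE (by norm_num : 2 ≤ 3) i)).ofLp ∈
        Module.End.eigenspace (Matrix.toLin' A) (d 0) := by
      intro i
      rw [Module.End.mem_eigenspace_iff, toLin'_apply]
      fin_cases i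
      · exact hA 0
      · rw [hd]; exact hA 1
    have hli3 : LinearIndependent ℂ (fun i : Fin 2 ↦
        (⟨_, hmem i⟩ : Module.End.eigenspace (Matrix.toLin' A) (d 0))) :=
      LinearIndependent.of_comp (Submodule.subtype _) hli2
    simpa using hli3.fintype_card_le_finrank
  have h1 := key hA hd
  have h2 := key hB hd'
  set E := Module.End.eigenspace (Matrix.toLin' A) (d 0) with hE
  set E' := Module.End.eigenspace (Matrix.toLin' B) (d' 0) with hE'
  have h3 := Submodule.finrank_sup_add_finrank_inf_eq E E'
  have h4 := Submodule.finrank_le (E ⊔ E')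
  rw [Module.finrank_fin_fun] at h4
  have h5 : E ⊓ E' ≠ ⊥ := by
    intro h
    rw [h, finrank_bot] at h3
    omega
  obtain ⟨v, ⟨hv, hvB⟩, hv0⟩ := Submodule.exists_mem_ne_zero_of_ne_bot h5
  rw [SetLike.mem_coe, hE, Module.End.mem_eigenspace_iff, toLin'_apply] at hv
  rw [SetLike.mem_coe, hE', Module.End.mem_eigenspace_iff, toLin'_apply] at hvB
  exact ⟨v, hv0, hv, hvB⟩

/-- A matrix whose eigenvalues all coincide is scalar. -/
theorem IsEigenbasis.mulVec_of_const {A : Matrix (Fin 3) (Fin 3) ℂ}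
    {b : OrthonormalBasis (Fin 3) ℂ (EuclideanSpace ℂ (Fin 3))} {d : Fin 3 → ℂ}
    (hA : IsEigenbasis A b d) (h01 : d 0 = d 1) (h12 : d 1 = d 2) (v : Fin 3 → ℂ) :
    A *ᵥ v = d 0 • v := by
  have hd : diagonal d = d 0 • (1 : Matrix (Fin 3) (Fin 3) ℂ) := by
    rw [smul_one_eq_diagonal]
    congr 1
    ext i
    fin_cases i <;> simp [h01, h12]
  rw [hA.eq_conj, hd]
  simp [basisMatrix_mul_star, smul_mulVec]

/-- `α(h)` is scalar, so a common eigenvector of `α(x)` and `α(y)` spans an invariant line. -/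
theorem IsIrrep.no_common_eigenvector {p q : ℕ} {a : ℤ} {α : KnotGroup p q a →* SU 3}
    (hirr : IsIrrep α) {v : Fin 3 → ℂ} (hv : v ≠ 0) {μ ν : ℂ}
    (hx : matSU (α KnotGroup.x) *ᵥ v = μ • v) (hy : matSU (α KnotGroup.y) *ᵥ v = ν • v) :
    False := by
  obtain ⟨l, -, hl⟩ := hirr.central KnotGroup.h_mul
  refine hirr.eigenvectorStabilizer_ne_top hv (KnotGroup.closure_eq_top _
    (mem_eigenvectorStabilizer hv hx) (mem_eigenvectorStabilizer hv hy)
    (mem_eigenvectorStabilizer hv (μ := l) ?_))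
  rw [hl, smul_mulVec, one_mulVec]

end Irreducible

/-- For an irreducible `α : π₁(Z) → SU(3)`, `α(h) = e^{2πik/3}·I`,
`H⁰(π₁(Z); su(3)_α) = 0`, and `dim_ℝ H¹(π₁(Z); su(3)_α)` is `4` if both `α(x)` and `α(y)` have
three pairwise distinct eigenvalues, and `2` otherwise. -/
theorem irreducible_SU3_rep_cohomology_knot (p q : ℕ) (hp : 0 < p) (hq : 0 < q)
    (hpq : Nat.Coprime p q) (a : ℤ)
    (α : KnotGroup p q a →* SU 3) (hirr : IsIrrep α) :
    (∃ k : ℤ, matSU (α KnotGroup.h)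
        = Complex.exp (2 * Real.pi * Complex.I * k / 3) • (1 : Matrix (Fin 3) (Fin 3) ℂ)) ∧
    (adjRep α).invariants = ⊥ ∧
    (((spectrum ℂ (matSU (α KnotGroup.x))).ncard = 3 ∧
      (spectrum ℂ (matSU (α KnotGroup.y))).ncard = 3) →
      Module.finrank ℝ (groupCohomology.H1 (Rep.of (adjRep α))) = 4) ∧
    (¬ ((spectrum ℂ (matSU (α KnotGroup.x))).ncard = 3 ∧
      (spectrum ℂ (matSU (α KnotGroup.y))).ncard = 3) →
      Module.finrank ℝ (groupCohomology.H1 (Rep.of (adjRep α))) = 2) := by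
  have hcent : ∀ g : KnotGroup p q a, KnotGroup.h ^ a * g = g * KnotGroup.h ^ a := fun g ↦
    (show Commute KnotGroup.h g from KnotGroup.h_mul g).zpow_left a
  have hinv := hirr.invariants_eq_bot
  refine ⟨?_, hinv, ?_⟩
  · obtain ⟨μ, hμ3, hμ⟩ := hirr.central KnotGroup.h_mul
    obtain ⟨k, -, hk⟩ := (Complex.isPrimitiveRoot_exp 3 (by norm_num)).eq_pow_of_pow_eq_one hμ3
    refine ⟨k, ?_⟩
    rw [hμ, ← hk, ← Complex.exp_nat_mul]
    congr 2
    push_cast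
    ring
  obtain ⟨c, hc3, hc⟩ := hirr.central hcent
  have hc0 : c ≠ 0 := by rintro rfl; norm_num at hc3
  have hxpow : matSU (α KnotGroup.x) ^ p = c • (1 : Matrix (Fin 3) (Fin 3) ℂ) := by
    rw [← matSU_map_pow, KnotGroup.x_pow, hc]
  have hypow : matSU (α KnotGroup.y) ^ q = c • (1 : Matrix (Fin 3) (Fin 3) ℂ) := by
    rw [← matSU_map_pow, KnotGroup.y_pow, hc]
  have hdim := finrank_H1_add (adjRep α) hp hq (hirr.adjRep_central KnotGroup.h_mul)
    (by rw [← map_pow, KnotGroup.x_pow, hirr.adjRep_central hcent])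
    (by rw [← map_pow, KnotGroup.y_pow, hirr.adjRep_central hcent]) hinv
  obtain ⟨b, d, hb, hd⟩ := exists_sorted_isEigenbasis
    (exists_isEigenbasis _ (matSU_mem_unitary α KnotGroup.x) p hp c hc0 hxpow)
  obtain ⟨b', d', hb', hd'⟩ := exists_sorted_isEigenbasis
    (exists_isEigenbasis _ (matSU_mem_unitary α KnotGroup.y) q hq c hc0 hypow)
  rw [finrank_ker_adjRep, finrank_ker_adjRep, finrank_su3, hb.finrank_su3Centralizer,
    hb'.finrank_su3Centralizer] at hdim
  rw [hb.ncard_spectrum_eq_three_iff, hb'.ncard_spectrum_eq_three_iff]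
  have hne : ∀ {b : OrthonormalBasis (Fin 3) ℂ (EuclideanSpace ℂ (Fin 3))} (i : Fin 3),
      (b i).ofLp ≠ 0 := fun {b} i h0 ↦ b.orthonormal.ne_zero i (by ext j; rw [h0]; rfl)
  -- If `α(x)` or `α(y)` is scalar, every eigenvector of the other one is a common eigenvector.
  have hd2 : Function.Injective d ∨ (d 0 = d 1 ∧ d 1 ≠ d 2) := by
    rcases hd with h | h | ⟨h01, h12⟩
    · exact .inl h
    · exact .inr h
    · exact (hirr.no_common_eigenvector (hne 0) (hb.mulVec_of_const h01 h12 _) (hb' 0)).elim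
  have hd2' : Function.Injective d' ∨ (d' 0 = d' 1 ∧ d' 1 ≠ d' 2) := by
    rcases hd' with h | h | ⟨h01, h12⟩
    · exact .inl h
    · exact .inr h
    · exact (hirr.no_common_eigenvector (hne 0) (hb 0) (hb'.mulVec_of_const h01 h12 _)).elim
  have hnot : ∀ {d : Fin 3 → ℂ}, d 0 = d 1 → ¬ Function.Injective d := fun h hi ↦
    absurd (hi h) (by decide)
  rcases hd2 with hi | ⟨h01, h12⟩ <;> rcases hd2' with hi' | ⟨h01', h12'⟩
  · rw [finrank_su3Centralizer_of_injective hi, finrank_su3Centralizer_of_injective hi'] at hdim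
    exact ⟨fun _ ↦ by omega, fun h ↦ absurd ⟨hi, hi'⟩ h⟩
  · rw [finrank_su3Centralizer_of_injective hi, finrank_su3Centralizer_of_two h01' h12'] at hdim
    exact ⟨fun h ↦ absurd h.2 (hnot h01'), fun _ ↦ by omega⟩
  · rw [finrank_su3Centralizer_of_two h01 h12, finrank_su3Centralizer_of_injective hi'] at hdim
    exact ⟨fun h ↦ absurd h.1 (hnot h01), fun _ ↦ by omega⟩
  · obtain ⟨v, hv, hvx, hvy⟩ := exists_common_eigenvector hb hb' h01 h01'
    exact (hirr.no_common_eigenvector hv hvx hvy).elim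
end

section
/- Assume p and q are odd. Let k, ℓ, ε be integers with 1 ≤ k ≤ p−1, 1 ≤ ℓ ≤ q−1, ε ∈ {0,1}, and k ≡ ℓ ≡ a·ε (mod 2). Then for every real s ∈ [0,1] there is a unique group homomorphism β_s: π_Z → Sp(1) with β_s(x) = cos(πk/p) + sin(πk/p)·i, β_s(y) = cos(πℓ/q) + sin(πℓ/q)·(cos(πs)·i + sin(πs)·j), and β_s(h) = (−1)^ε. Moreover, for 0 < s < 1 the image of β_s is a nonabelian subgroup of Sp(1). -/
/-- `Sp(1)`, the group of unit quaternions. -/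
noncomputable abbrev Sp1 : Type := Metric.sphere (0 : Quaternion ℝ) 1

/-- The defining conditions on a homomorphism `β : π₁(Z) → Sp(1)`:
`β(x) = cos(πk/p) + sin(πk/p)·i`,
`β(y) = cos(πℓ/q) + sin(πℓ/q)(cos(πs)·i + sin(πs)·j)`, and `β(h) = (−1)^ε`. -/
def betaSpec (p q : ℕ) (a : ℤ) (k l ε : ℕ) (s : ℝ) (β : KnotGroup p q a →* Sp1) : Prop :=
  ((β KnotGroup.x : Quaternion ℝ)
      = ⟨Real.cos (Real.pi * k / p), Real.sin (Real.pi * k / p), 0, 0⟩) ∧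
  ((β KnotGroup.y : Quaternion ℝ)
      = ⟨Real.cos (Real.pi * l / q), Real.sin (Real.pi * l / q) * Real.cos (Real.pi * s),
          Real.sin (Real.pi * l / q) * Real.sin (Real.pi * s), 0⟩) ∧
  ((β KnotGroup.h : Quaternion ℝ) = ⟨(-1 : ℝ) ^ ε, 0, 0, 0⟩)

/-- The quaternion with the given coordinates. The constructor of `QuaternionAlgebra` is wrapped so
that the value has type `Quaternion ℝ` syntactically, which rewriting requires. -/
def quat (a b c d : ℝ) : Quaternion ℝ := ⟨a, b, c, d⟩

@[simp] theorem quat_re (a b c d : ℝ) : (quat a b c d).re = a := rfl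
@[simp] theorem quat_imI (a b c d : ℝ) : (quat a b c d).imI = b := rfl
@[simp] theorem quat_imJ (a b c d : ℝ) : (quat a b c d).imJ = c := rfl
@[simp] theorem quat_imK (a b c d : ℝ) : (quat a b c d).imK = d := rfl

theorem quat_one : quat 1 0 0 0 = 1 := rfl

theorem quat_neg_one : quat (-1) 0 0 0 = -1 := by
  apply Quaternion.ext <;> simp [← quat_one]

/-- The unit quaternion `cos θ + sin θ · (u i + v j)`, where `u² + v² = 1`. -/
noncomputable def planarRot (u v : ℝ) (huv : u ^ 2 + v ^ 2 = 1) (θ : ℝ) : Sp1 :=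
  ⟨quat (Real.cos θ) (Real.sin θ * u) (Real.sin θ * v) 0, by
    have hn : Quaternion.normSq
        (quat (Real.cos θ) (Real.sin θ * u) (Real.sin θ * v) 0) = 1 := by
      rw [Quaternion.normSq_def']
      simp only [quat_re, quat_imI, quat_imJ, quat_imK]
      linear_combination Real.sin_sq_add_cos_sq θ + Real.sin θ ^ 2 * huv
    rw [Quaternion.normSq_eq_norm_mul_self] at hn
    rw [mem_sphere_zero_iff_norm]
    nlinarith [norm_nonneg (quat (Real.cos θ) (Real.sin θ * u) (Real.sin θ * v) 0)]⟩

theorem coe_planarRot (u v : ℝ) (huv : u ^ 2 + v ^ 2 = 1) (θ : ℝ) :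
    (planarRot u v huv θ : Quaternion ℝ)
      = quat (Real.cos θ) (Real.sin θ * u) (Real.sin θ * v) 0 := rfl

theorem planarRot_zero (u v : ℝ) (huv : u ^ 2 + v ^ 2 = 1) : planarRot u v huv 0 = 1 := by
  apply Subtype.ext
  simp [coe_planarRot, quat_one]

theorem planarRot_mul (u v : ℝ) (huv : u ^ 2 + v ^ 2 = 1) (θ φ : ℝ) :
    planarRot u v huv θ * planarRot u v huv φ = planarRot u v huv (θ + φ) := by
  apply Subtype.ext
  rw [Metric.unitSphere.coe_mul]
  simp only [coe_planarRot, Real.cos_add, Real.sin_add]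
  apply Quaternion.ext <;>
    simp only [Quaternion.re_mul, Quaternion.imI_mul, Quaternion.imJ_mul, Quaternion.imK_mul,
      quat_re, quat_imI, quat_imJ, quat_imK]
  · linear_combination - Real.sin θ * Real.sin φ * huv
  · ring
  · ring
  · ring

/-- De Moivre's formula for unit quaternions. -/
theorem planarRot_pow (u v : ℝ) (huv : u ^ 2 + v ^ 2 = 1) (θ : ℝ) (n : ℕ) :
    planarRot u v huv θ ^ n = planarRot u v huv (n * θ) := by
  induction n with
  | zero => simp [planarRot_zero]
  | succ n ih =>
    rw [pow_succ, ih, planarRot_mul]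
    congr 1
    push_cast
    ring

/-- The central element `-1` of `Sp(1)`. -/
noncomputable def negOne : Sp1 := planarRot 1 0 (by norm_num) Real.pi

theorem coe_negOne : (negOne : Quaternion ℝ) = -1 := by
  simp [negOne, coe_planarRot, quat_neg_one]

theorem negOne_sq : negOne ^ 2 = 1 := by
  apply Subtype.ext
  simp [coe_negOne]

theorem negOne_mul_comm (g : Sp1) : negOne * g = g * negOne := by
  apply Subtype.ext
  simp [coe_negOne]

/-- For every axis `(u, v)`, the element of angle `π m / n` has `n`-th power `(-1)^m`. -/
theorem planarRot_pow_eq (u v : ℝ) (huv : u ^ 2 + v ^ 2 = 1) (m n : ℕ) (hn : 0 < n) :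
    planarRot u v huv (Real.pi * m / n) ^ n = negOne ^ m := by
  have hn' : (n : ℝ) ≠ 0 := by positivity
  have hπ : planarRot u v huv Real.pi = negOne := by
    apply Subtype.ext
    simp [negOne, coe_planarRot]
  rw [planarRot_pow, ← hπ, planarRot_pow]
  congr 1
  field_simp

/-- Since `(-1)² = 1`, powers of `-1` depend only on the parity of the exponent. -/
theorem negOne_zpow_congr {m n : ℤ} (hmn : m ≡ n [ZMOD 2]) : negOne ^ m = negOne ^ n := by
  obtain ⟨c, hc⟩ := hmn.dvd
  have hn : n = m + 2 * c := by omega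
  have h2 : negOne ^ (2 : ℤ) = 1 := by exact_mod_cast negOne_sq
  rw [hn, zpow_add, zpow_mul, h2, one_zpow, mul_one]

/-- For `p, q` odd and `k, ℓ, ε` with `1 ≤ k ≤ p−1`, `1 ≤ ℓ ≤ q−1`,
`ε ∈ {0,1}` and `k ≡ ℓ ≡ aε (mod 2)`, and any `s ∈ [0,1]`, there is a unique homomorphism
`β_s : π₁(Z) → Sp(1)` with the prescribed values on `x`, `y`, `h`; and for `0 < s < 1` its
image is nonabelian. -/
theorem exists_unique_Sp1_rep (p q : ℕ) (hp : 0 < p) (hq : 0 < q)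
    (hpodd : Odd p) (hqodd : Odd q) (hpq : Nat.Coprime p q) (a : ℤ)
    (k l ε : ℕ) (hk1 : 1 ≤ k) (hk2 : k ≤ p - 1) (hl1 : 1 ≤ l) (hl2 : l ≤ q - 1)
    (hε : ε = 0 ∨ ε = 1)
    (hkl : (k : ℤ) ≡ l [ZMOD 2]) (hla : (l : ℤ) ≡ a * ε [ZMOD 2])
    (s : ℝ) (hs0 : 0 ≤ s) (hs1 : s ≤ 1) :
    (∃! β : KnotGroup p q a →* Sp1, betaSpec p q a k l ε s β) ∧
    (0 < s → s < 1 → ∀ β : KnotGroup p q a →* Sp1, betaSpec p q a k l ε s β →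
      ∃ g₁ g₂ : KnotGroup p q a, β g₁ * β g₂ ≠ β g₂ * β g₁) := by
  have hsin : ∀ m n : ℕ, 1 ≤ m → m ≤ n - 1 → 0 < Real.sin (Real.pi * m / n) := by
    intro m n h1 h2
    have hm : (0 : ℝ) < m := by exact_mod_cast h1
    have hmn : (m : ℝ) < n := by exact_mod_cast (by omega : m < n)
    have hn : (0 : ℝ) < n := hm.trans hmn
    apply Real.sin_pos_of_pos_of_lt_pi
    · positivity
    · rw [div_lt_iff₀ hn]
      exact mul_lt_mul_of_pos_left hmn Real.pi_pos
  refine ⟨?_, ?_⟩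
  · have hs : Real.cos (Real.pi * s) ^ 2 + Real.sin (Real.pi * s) ^ 2 = 1 :=
      Real.cos_sq_add_sin_sq _
    let X : Sp1 := planarRot 1 0 (by norm_num) (Real.pi * k / p)
    let Y : Sp1 := planarRot _ _ hs (Real.pi * l / q)
    let H : Sp1 := negOne ^ ε
    have hHa : H ^ a = negOne ^ (a * ε) := by
      rw [mul_comm, zpow_mul, zpow_natCast]
    have hX : X ^ p = H ^ a := by
      rw [planarRot_pow_eq _ _ _ _ _ hp, hHa, ← zpow_natCast]
      exact negOne_zpow_congr (hkl.trans hla)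
    have hY : Y ^ q = H ^ a := by
      rw [planarRot_pow_eq _ _ _ _ _ hq, hHa, ← zpow_natCast]
      exact negOne_zpow_congr hla
    have hH : ∀ g : Sp1, H * g = g * H := fun g =>
      (Commute.pow_left (negOne_mul_comm g) ε)
    have hrel : ∀ r ∈ knotRels p q a, FreeGroup.lift ![X, Y, H] r = 1 := by
      rintro r (rfl | rfl | rfl | rfl)
      · simp [hX]
      · simp [hY]
      · simp [hH X]
      · simp [hH Y]
    have hXc : (X : Quaternion ℝ)
        = quat (Real.cos (Real.pi * k / p)) (Real.sin (Real.pi * k / p)) 0 0 := by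
      simp [X, coe_planarRot]
    have hHc : (H : Quaternion ℝ) = quat ((-1 : ℝ) ^ ε) 0 0 0 := by
      rcases hε with rfl | rfl
      · simp [H, quat_one]
      · simp [H, coe_negOne, quat_neg_one]
    refine ⟨PresentedGroup.toGroup hrel, ⟨?_, ?_, ?_⟩, ?_⟩
    · rw [KnotGroup.x, PresentedGroup.toGroup.of]
      exact hXc
    · rw [KnotGroup.y, PresentedGroup.toGroup.of]
      rfl
    · rw [KnotGroup.h, PresentedGroup.toGroup.of]
      exact hHc
    · rintro β ⟨hx, hy, hh⟩
      apply PresentedGroup.ext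
      intro i
      rw [PresentedGroup.toGroup.of]
      apply Subtype.ext
      fin_cases i
      · exact hx.trans hXc.symm
      · exact hy
      · exact hh.trans hHc.symm
  · rintro hs hs' β ⟨hx, hy, -⟩
    refine ⟨KnotGroup.x, KnotGroup.y, fun hc => ?_⟩
    -- The `k`-components of `β(x)β(y)` and `β(y)β(x)` are opposite and nonzero.
    have hK := congrArg (fun g : Sp1 => (g : Quaternion ℝ).imK) hc
    change (β KnotGroup.x : Quaternion ℝ) = quat _ _ _ _ at hx
    change (β KnotGroup.y : Quaternion ℝ) = quat _ _ _ _ at hy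
    simp only [Metric.unitSphere.coe_mul, hx, hy, Quaternion.imK_mul,
      quat_re, quat_imI, quat_imJ, quat_imK] at hK
    have h1 := hsin k p hk1 hk2
    have h2 := hsin l q hl1 hl2
    have h3 : 0 < Real.sin (Real.pi * s) :=
      Real.sin_pos_of_pos_of_lt_pi (mul_pos Real.pi_pos hs)
        (mul_lt_of_lt_one_right Real.pi_pos hs')
    have h4 := mul_pos h1 (mul_pos h2 h3)
    linarith
end

section
/- Let A and B be diagonal matrices in SU(3) and let g ∈ SU(3). Suppose that A and g·B·g⁻¹ have no common eigenvector in ℂ³, and that the product A·g·B·g⁻¹ has three pairwise distinct eigenvalues. Then the real-linear map from su(3) to ℂ sending X to tr(B·g⁻¹·A·g·(X − B·X·B⁻¹)) is surjective onto ℂ. -/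
open Matrix

open scoped ComplexOrder in
/-- A traceless matrix `N` with `Re tr (N X) = 0` for all `X ∈ su(3)` is Hermitian: for
`X = N - Nᴴ` one has `2 Re tr (N X) = -tr (Xᴴ X)`. -/
lemma isHermitian_of_re_trace_eq_zero (N : Matrix (Fin 3) (Fin 3) ℂ) (htr : N.trace = 0)
    (h : ∀ X ∈ su3, (N * X).trace.re = 0) : Nᴴ = N := by
  set X := N - Nᴴ with hX
  have hXs : Xᴴ = -X := by simp [hX]
  have hmem : X ∈ su3 := ⟨hXs, by simp [hX, trace_conjTranspose, htr]⟩
  have h1 := h X hmem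
  have h2 : star (N * X).trace = -(Nᴴ * X).trace := by
    rw [← trace_conjTranspose, conjTranspose_mul, hXs, neg_mul, trace_neg, trace_mul_comm]
  have h3 : (Xᴴ * X).trace = -((N * X).trace + star (N * X).trace) := by
    rw [h2, hXs, neg_mul, trace_neg]
    conv_lhs => rw [hX]
    rw [← hX, sub_mul, trace_sub]
    ring
  have h4 : (N * X).trace + star (N * X).trace = 0 := by
    apply Complex.ext <;> simp [h1]
  rw [h4, neg_zero, trace_conjTranspose_mul_self_eq_zero_iff] at h3
  exact (sub_eq_zero.mp h3).symm

/-- The fibres of `z ↦ c z - d / z` on nonzero complex numbers have at most two elements. -/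
lemma two_to_one {c d x y z : ℂ} (hc : c ≠ 0) (hx : x ≠ 0) (hy : y ≠ 0) (hz : z ≠ 0)
    (hxy : x ≠ y) (hxz : x ≠ z) (h1 : c * x - d * x⁻¹ = c * y - d * y⁻¹)
    (h2 : c * x - d * x⁻¹ = c * z - d * z⁻¹) : y = z := by
  have key : ∀ {w : ℂ}, w ≠ 0 → x ≠ w → c * x - d * x⁻¹ = c * w - d * w⁻¹ →
      c * (x * w) = -d := by
    intro w hw hxw h
    field_simp at h
    apply mul_left_cancel₀ (sub_ne_zero.mpr hxw)
    linear_combination h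
  have e := (key hy hxy h1).trans (key hz hxz h2).symm
  exact mul_left_cancel₀ hx (mul_left_cancel₀ hc e)

/-- Among three distinct nonzero points, `f z = c z - d / z` takes at one of them a value that it
does not take at the two others. -/
lemma exists_isolated_value {c d : ℂ} (hc : c ≠ 0) (l : Fin 3 → ℂ) (hl : Function.Injective l)
    (h0 : ∀ i, l i ≠ 0) :
    ∃ i, ∀ j, j ≠ i → c * l j - d * (l j)⁻¹ ≠ c * l i - d * (l i)⁻¹ := by
  by_contra! H
  choose s hne hs using H
  have key : ∀ i j k, j ≠ i → k ≠ i → c * l j - d * (l j)⁻¹ = c * l i - d * (l i)⁻¹ →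
      c * l k - d * (l k)⁻¹ = c * l i - d * (l i)⁻¹ → j = k := fun i j k hj hk ej ek =>
    hl (two_to_one hc (h0 i) (h0 j) (h0 k) (hl.ne hj.symm) (hl.ne hk.symm) ej.symm ek.symm)
  -- `s` is a fixed-point-free involution of a three-element set, by two-to-oneness
  have inv : ∀ i, s (s i) = i := fun i =>
    key (s i) _ _ (hne (s i)) (hne i).symm (hs (s i)) (hs i).symm
  clear hs key
  revert s
  decide

/-- Unitary `A`, `D` such that `A D` has three distinct eigenvalues and some nonzero multiple of
their commutator is Hermitian share an eigenvector, namely the eigenvector of `A D` for an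
eigenvalue isolated by `z ↦ c z - c̄ / z`. -/
lemma exists_common_eigenvector_s12 (A D : Matrix (Fin 3) (Fin 3) ℂ)
    (hA : A * Aᴴ = 1) (hD : D * Dᴴ = 1) (hspec : (spectrum ℂ (A * D)).ncard = 3)
    (c : ℂ) (hc : c ≠ 0) (hH : (c • (D * A - A * D))ᴴ = c • (D * A - A * D)) :
    ∃ w : Fin 3 → ℂ, w ≠ 0 ∧ (∃ μ : ℂ, A.mulVec w = μ • w) ∧ (∃ ν : ℂ, D.mulVec w = ν • w) := by
  have hA' : Aᴴ * A = 1 := mul_eq_one_comm.mp hA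
  have hD' : Dᴴ * D = 1 := mul_eq_one_comm.mp hD
  obtain ⟨x, y, z, hxy, hxz, hyz, hs⟩ := Set.ncard_eq_three.mp hspec
  let l : Fin 3 → ℂ := ![x, y, z]
  have hl : Function.Injective l := by
    intro i j
    fin_cases i <;> fin_cases j <;> simp [l, hxy, hxz, hyz, hxy.symm, hxz.symm, hyz.symm]
  have hmem : ∀ i, l i ∈ spectrum ℂ (A * D) := by
    intro i; rw [hs]; fin_cases i <;> simp [l]
  have hev : ∀ i, ∃ v, Module.End.HasEigenvector (Matrix.toLin' (A * D)) (l i) v := by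
    intro i
    have := hmem i
    rw [← Matrix.spectrum_toLin', ← Module.End.hasEigenvalue_iff_mem_spectrum] at this
    exact this.exists_hasEigenvector
  choose v hv using hev
  have hli : LinearIndependent ℂ v := Module.End.eigenvectors_linearIndependent' _ l hl v hv
  let b := basisOfLinearIndependentOfCardEqFinrank hli (by simp)
  have hb : ∀ i, b i = v i := fun i => by simp [b]
  have hPv : ∀ i, (A * D) *ᵥ v i = l i • v i := fun i => by
    simpa using (hv i).apply_eq_smul
  have hP : (A * D)ᴴ * (A * D) = 1 := by
    rw [conjTranspose_mul, Matrix.mul_assoc, ← Matrix.mul_assoc Aᴴ, hA', Matrix.one_mul, hD']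
  have hQ : (D * A)ᴴ * (D * A) = 1 := by
    rw [conjTranspose_mul, Matrix.mul_assoc, ← Matrix.mul_assoc Dᴴ, hD', Matrix.one_mul, hA']
  have hstar : ∀ (U : Matrix (Fin 3) (Fin 3) ℂ) (u : Fin 3 → ℂ) (t : ℂ), Uᴴ * U = 1 → t ≠ 0 →
      U *ᵥ u = t • u → Uᴴ *ᵥ u = t⁻¹ • u := by
    intro U u t hU ht hu
    have : Uᴴ *ᵥ (U *ᵥ u) = u := by rw [mulVec_mulVec, hU, one_mulVec]
    rw [hu, mulVec_smul] at this
    rw [eq_inv_smul_iff₀ ht, this]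
  have h0 : ∀ i, l i ≠ 0 := by
    intro i hi
    have h1 : (A * D)ᴴ *ᵥ ((A * D) *ᵥ v i) = v i := by rw [mulVec_mulVec, hP, one_mulVec]
    rw [hPv, hi, zero_smul, mulVec_zero] at h1
    exact (hv i).2 h1.symm
  obtain ⟨i, hi⟩ := exists_isolated_value (d := star c) hc l hl h0
  set F : Matrix (Fin 3) (Fin 3) ℂ := c • (A * D) - star c • (A * D)ᴴ with hF
  -- as `Z⁻¹ = Zᴴ` for unitary `Z`, this says that `c Z - c̄ Z⁻¹` agrees at `A D` and `D A`
  have hFQ : F = c • (D * A) - star c • (D * A)ᴴ := by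
    rw [conjTranspose_smul, conjTranspose_sub, smul_sub, smul_sub] at hH
    rw [hF, sub_eq_sub_iff_add_eq_add]
    rw [sub_eq_sub_iff_add_eq_add] at hH
    rw [add_comm, ← hH, add_comm]
  have hFv : ∀ j, F *ᵥ v j = (c * l j - star c * (l j)⁻¹) • v j := by
    intro j
    rw [hF, sub_mulVec, smul_mulVec, smul_mulVec, hPv, hstar _ _ _ hP (h0 j) (hPv j),
      smul_smul, smul_smul, sub_smul]
  set w := Aᴴ *ᵥ v i with hw
  have hAw : A *ᵥ w = v i := by rw [hw, mulVec_mulVec, hA, one_mulVec]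
  have hDv : D *ᵥ v i = l i • w := by
    rw [hw, ← mulVec_smul, ← hPv, mulVec_mulVec, ← Matrix.mul_assoc, hA', Matrix.one_mul]
  have hQw : (D * A) *ᵥ w = l i • w := by
    rw [← mulVec_mulVec, hAw, hDv]
  have hFw : F *ᵥ w = (c * l i - star c * (l i)⁻¹) • w := by
    rw [hFQ, sub_mulVec, smul_mulVec, smul_mulVec, hQw, hstar _ _ _ hQ (h0 i) hQw,
      smul_smul, smul_smul, sub_smul]
  have hrep : ∑ j, b.repr w j • v j = w := by
    simpa [hb] using b.sum_repr w
  have hcoef : ∀ j, j ≠ i → b.repr w j = 0 := by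
    have h1 : ∑ j, (b.repr w j * ((c * l j - star c * (l j)⁻¹)
        - (c * l i - star c * (l i)⁻¹))) • v j = 0 := by
      have h2 : F *ᵥ w - (c * l i - star c * (l i)⁻¹) • w = 0 := by rw [hFw, sub_self]
      rw [← hrep, mulVec_sum, Finset.smul_sum, ← Finset.sum_sub_distrib] at h2
      rw [← h2]
      refine Finset.sum_congr rfl fun j _ => ?_
      rw [mulVec_smul, hFv, smul_smul, smul_smul, ← sub_smul]
      congr 1
      ring
    intro j hj
    have h3 := Fintype.linearIndependent_iff.mp hli _ h1 j
    exact (mul_eq_zero.mp h3).resolve_right (sub_ne_zero.mpr (hi j hj))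
  have hwv : w = b.repr w i • v i := by
    conv_lhs => rw [← hrep]
    exact Finset.sum_eq_single i (fun j _ hj => by rw [hcoef j hj, zero_smul]) (by simp)
  set a := b.repr w i
  have ha : a ≠ 0 := by
    rintro h
    rw [h, zero_smul] at hwv
    rw [hwv, mulVec_zero] at hAw
    exact (hv i).2 hAw.symm
  refine ⟨v i, (hv i).2, ⟨a⁻¹, ?_⟩, ⟨l i * a, ?_⟩⟩
  · rw [eq_inv_smul_iff₀ ha, ← mulVec_smul, ← hwv, hAw]
  · rw [hDv, mul_smul, ← hwv]

/-- For diagonal `A, B ∈ SU(3)` and `g ∈ SU(3)` such that `A` and `gBg⁻¹`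
have no common eigenvector and `A·gBg⁻¹` has three pairwise distinct eigenvalues, the
real-linear map `su(3) → ℂ`, `X ↦ tr(B·g⁻¹·A·g·(X − B·X·B⁻¹))`, is surjective. -/
theorem trace_map_surjective (A B g : SU 3)
    (hA : (matSU A).IsDiag) (hB : (matSU B).IsDiag)
    (hnc : ¬ ∃ w : Fin 3 → ℂ, w ≠ 0 ∧
      (∃ μ : ℂ, (matSU A).mulVec w = μ • w) ∧
      (∃ ν : ℂ, (matSU g * matSU B * matSU g⁻¹).mulVec w = ν • w))
    (hdist : (spectrum ℂ (matSU A * (matSU g * matSU B * matSU g⁻¹))).ncard = 3) :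
    Function.Surjective (fun X : su3 =>
      Matrix.trace (matSU B * matSU g⁻¹ * matSU A * matSU g *
        ((X : Matrix (Fin 3) (Fin 3) ℂ)
          - matSU B * (X : Matrix (Fin 3) (Fin 3) ℂ) * matSU B⁻¹))) := by
  have hinv : ∀ U : SU 3, matSU U⁻¹ = (matSU U)ᴴ := fun U => rfl
  have hU : ∀ U : SU 3, matSU U * (matSU U)ᴴ = 1 := fun U => Unitary.mul_star_self_of_mem U.val.2
  have hU' : ∀ U : SU 3, (matSU U)ᴴ * matSU U = 1 := fun U => mul_eq_one_comm.mp (hU U)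
  have hg := hU g
  have hg' := hU' g
  have hBB := hU B
  have hBB' := hU' B
  have hAA := hU A
  simp only [hinv] at hnc hdist ⊢
  generalize matSU A = a at *
  generalize matSU B = b at *
  generalize matSU g = k at *
  set C := kᴴ * a * k with hC
  set M := b * C - C * b with hM
  have htrace : ∀ X : Matrix (Fin 3) (Fin 3) ℂ,
      (b * kᴴ * a * k * (X - b * X * bᴴ)).trace = (M * X).trace := by
    intro X
    have e1 : b * kᴴ * a * k = b * C := by rw [hC]; simp only [Matrix.mul_assoc]
    have e2 : (b * C * (b * X * bᴴ)).trace = (C * b * X).trace := by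
      rw [← Matrix.mul_assoc, trace_mul_comm]
      congr 1
      calc bᴴ * (b * C * (b * X)) = (bᴴ * b) * (C * b * X) := by simp only [Matrix.mul_assoc]
        _ = C * b * X := by rw [hBB', Matrix.one_mul]
    rw [e1, mul_sub, trace_sub, e2, hM, sub_mul, trace_sub]
  simp only [htrace]
  let T : su3 →ₗ[ℝ] ℂ :=
    { toFun := fun X => (M * (X : Matrix (Fin 3) (Fin 3) ℂ)).trace
      map_add' := fun X Y => by simp [mul_add]
      map_smul' := fun r X => by simp }
  change Function.Surjective T
  rw [← LinearMap.range_eq_top]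
  by_contra hT
  obtain ⟨φ, hφ, hle⟩ := Submodule.exists_le_ker_of_lt_top _ (lt_top_iff_ne_top.mpr hT)
  -- `φ z = Re (c z)`
  set c : ℂ := ⟨φ 1, -φ Complex.I⟩ with hcdef
  have hφc : ∀ z : ℂ, φ z = (c * z).re := by
    intro z
    have hz : z = z.re • (1 : ℂ) + z.im • Complex.I := by
      apply Complex.ext <;> simp
    conv_lhs => rw [hz, map_add, map_smul, map_smul]
    simp [hcdef]
    ring
  have hc : c ≠ 0 := by
    intro h
    apply hφ
    ext z
    simp [hφc, h]
  have hN : (c • M)ᴴ = c • M := by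
    apply isHermitian_of_re_trace_eq_zero
    · rw [trace_smul, hM, trace_sub, trace_mul_comm, sub_self, smul_zero]
    · intro X hX
      have := hle (LinearMap.mem_range_self T ⟨X, hX⟩)
      rw [LinearMap.mem_ker, hφc] at this
      rw [smul_mul, trace_smul, smul_eq_mul]
      exact this
  apply hnc
  set D := k * b * kᴴ with hDdef
  have hD : D * Dᴴ = 1 := by
    calc D * Dᴴ = k * (b * ((kᴴ * k) * bᴴ)) * kᴴ := by
          simp only [hDdef, conjTranspose_mul, conjTranspose_conjTranspose, Matrix.mul_assoc]
      _ = 1 := by rw [hg', Matrix.one_mul, hBB, Matrix.mul_one, hg]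
  have hconj : D * a - a * D = k * M * kᴴ := by
    have e1 : k * (b * C) * kᴴ = D * a := by
      calc k * (b * C) * kᴴ = k * b * kᴴ * a * (k * kᴴ) := by
            simp only [hC, Matrix.mul_assoc]
        _ = D * a := by rw [hg, Matrix.mul_one]
    have e2 : k * (C * b) * kᴴ = a * D := by
      calc k * (C * b) * kᴴ = (k * kᴴ) * (a * (k * b * kᴴ)) := by
            simp only [hC, Matrix.mul_assoc]
        _ = a * D := by rw [hg, Matrix.one_mul]
    rw [hM, mul_sub, sub_mul, e1, e2]
  refine exists_common_eigenvector_s12 a D hAA hD hdist c hc ?_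
  have hs : c • (D * a - a * D) = k * (c • M) * kᴴ := by
    rw [hconj, Matrix.mul_smul, Matrix.smul_mul]
  rw [hs, conjTranspose_mul, conjTranspose_mul, conjTranspose_conjTranspose, hN, Matrix.mul_assoc]
end

section
/- Let p, q, r be positive integers and m an integer with 0 < m < r. Then there exist ε > 0 and continuously differentiable functions u, v: (−ε, ε) → ℝ with u(0) = 2πpqm/r and v(0) = 0, such that for all t ∈ (−ε, ε): (r/(pq))·u(t) − 2πm = −t·sin(u(t))·sin(v(t)) and (r/(pq))·v(t) = (t/3)·(cos(u(t))·cos(v(t)) − 2·cos²(v(t)) + 1). Moreover u′(0) = 0 and v′(0) = (pq/(3r))·(cos(2πpqm/r) − 1). -/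
open Real

/-!
Dividing both equations by `r/(pq)` turns the system into the fixed-point equation
`w = a + t • H w` for `w = (u, v)`, where `a = (2πpqm/r, 0)` and
`H (u, v) = (pq/r) • (-sin u sin v, (cos u cos v - 2 cos² v + 1)/3)`.
The partial derivative of `w - t • H w` in `w` at `t = 0` is the identity, so the implicit function
theorem yields a `C¹` solution branch through `a`, and differentiating the equation at `t = 0`
gives `w′(0) = H a` (`exists_contDiffOn_eq_add_smul`). The claimed derivatives are the two
coordinates of `H a`.
-/

/-- A fixed-point equation `w = a + t • H w` with `H` of class `C¹` has, for small `t`, a `C¹`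
solution branch through `a`, with initial velocity `H a`. -/
lemma exists_contDiffOn_eq_add_smul {E : Type*} [NormedAddCommGroup E] [NormedSpace ℝ E]
    [CompleteSpace E] {H : E → E} (hH : ContDiff ℝ 1 H) (a : E) :
    ∃ ε > (0 : ℝ), ∃ w : ℝ → E, ContDiffOn ℝ 1 w (Set.Ioo (-ε) ε) ∧ w 0 = a ∧
      (∀ t ∈ Set.Ioo (-ε) ε, w t = a + t • H (w t)) ∧ HasDerivAt w (H a) 0 := by
  have hf : ContDiff ℝ 1 (fun x : ℝ × E => x.2 - x.1 • H x.2) := by fun_prop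
  have cdf := hf.contDiffAt (x := ((0 : ℝ), a))
  have hpartial : fderiv ℝ (fun x : ℝ × E => x.2 - x.1 • H x.2) (0, a) ∘L .inr ℝ ℝ E
      = ContinuousLinearMap.id ℝ E := by
    have h1 : HasFDerivAt (fun x : ℝ × E => x.2 - x.1 • H x.2)
        (fderiv ℝ (fun x : ℝ × E => x.2 - x.1 • H x.2) (0, a)) (0, a) :=
      (cdf.differentiableAt one_ne_zero).hasFDerivAt
    have h2 := h1.comp a (hasFDerivAt_prodMk_right (𝕜 := ℝ) (0 : ℝ) a)
    refine h2.unique ?_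
    -- on the slice `t = 0` the map is the identity
    simp only [Function.comp_def, zero_smul, sub_zero]
    exact hasFDerivAt_id a
  have hinv : (fderiv ℝ (fun x : ℝ × E => x.2 - x.1 • H x.2) (0, a) ∘L
      .inr ℝ ℝ E).IsInvertible := by
    rw [hpartial]
    exact ⟨ContinuousLinearEquiv.refl ℝ E, rfl⟩
  set w := cdf.implicitFunction one_ne_zero hinv with hw
  have hw0 : w 0 = a := cdf.implicitFunction_apply_self one_ne_zero hinv
  have hwc : ContDiffAt ℝ 1 w 0 := cdf.contDiffAt_implicitFunction one_ne_zero hinv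
  have heq : ∀ᶠ t in nhds (0 : ℝ), w t = a + t • H (w t) := by
    filter_upwards [cdf.eventually_apply_implicitFunction one_ne_zero hinv] with t ht
    simp only [zero_smul, sub_zero] at ht
    exact sub_eq_iff_eq_add.mp ht
  have hderiv : HasDerivAt w (H a) 0 := by
    have hHw : DifferentiableAt ℝ (fun t => H (w t)) 0 :=
      ((hH.differentiable one_ne_zero) (w 0)).comp 0 (hwc.differentiableAt one_ne_zero)
    have h := ((hasDerivAt_id (0 : ℝ)).smul hHw.hasDerivAt).const_add a
    simp only [id, zero_smul, one_smul, zero_add, hw0] at h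
    exact h.congr_of_eventuallyEq heq
  obtain ⟨ε, hε, hball⟩ := Metric.eventually_nhds_iff_ball.mp
    (heq.and (hwc.eventually (by simp)))
  rw [Real.ball_eq_Ioo, zero_sub, zero_add] at hball
  exact ⟨ε, hε, w, fun t ht => (hball t ht).2.contDiffWithinAt, hw0,
    fun t ht => (hball t ht).1, hderiv⟩

/-- Implicit-function-theorem solution of the perturbed holonomy equations:
there are `C¹` functions `u, v` on `(−ε, ε)` with `u(0) = 2πpqm/r`, `v(0) = 0`, solving
`(r/pq)·u(t) − 2πm = −t·sin(u(t))·sin(v(t))` and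
`(r/pq)·v(t) = (t/3)(cos(u(t))·cos(v(t)) − 2cos²(v(t)) + 1)`, with `u′(0) = 0` and
`v′(0) = (pq/3r)(cos(2πpqm/r) − 1)`. -/
theorem perturbed_holonomy_implicit_function (p q r : ℕ) (hp : 0 < p) (hq : 0 < q)
    (hr : 0 < r) (m : ℤ) (hm0 : 0 < m) (hmr : m < (r : ℤ)) :
    ∃ ε > (0 : ℝ), ∃ u v : ℝ → ℝ,
      ContDiffOn ℝ 1 u (Set.Ioo (-ε) ε) ∧ ContDiffOn ℝ 1 v (Set.Ioo (-ε) ε) ∧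
      u 0 = 2 * π * p * q * m / r ∧ v 0 = 0 ∧
      (∀ t ∈ Set.Ioo (-ε) ε,
        ((r : ℝ) / (p * q)) * u t - 2 * π * m = -t * sin (u t) * sin (v t) ∧
        ((r : ℝ) / (p * q)) * v t
          = (t / 3) * (cos (u t) * cos (v t) - 2 * cos (v t) ^ 2 + 1)) ∧
      deriv u 0 = 0 ∧
      deriv v 0 = ((p : ℝ) * q / (3 * r)) * (cos (2 * π * p * q * m / r) - 1) := by
  have hp' : (p : ℝ) ≠ 0 := by positivity
  have hq' : (q : ℝ) ≠ 0 := by positivity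
  have hr' : (r : ℝ) ≠ 0 := by positivity
  obtain ⟨ε, hε, w, hwc, hw0, heq, hd⟩ := exists_contDiffOn_eq_add_smul
    (H := fun x : ℝ × ℝ => ((p : ℝ) * q / r * (-sin x.1 * sin x.2),
      (p : ℝ) * q / r * ((cos x.1 * cos x.2 - 2 * cos x.2 ^ 2 + 1) / 3)))
    (by fun_prop) (2 * π * p * q * m / r, 0)
  refine ⟨ε, hε, fun t => (w t).1, fun t => (w t).2, hwc.fst, hwc.snd, by simp [hw0],
    by simp [hw0], fun t ht => ?_, ?_, ?_⟩
  · have h := heq t ht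
    have h1 := congrArg Prod.fst h
    have h2 := congrArg Prod.snd h
    simp only [Prod.fst_add, Prod.snd_add, Prod.smul_fst, Prod.smul_snd, smul_eq_mul,
      zero_add] at h1 h2
    beta_reduce
    -- the trigonometric terms are generalized so that `rw` hits only the linear occurrence
    constructor
    · generalize sin (w t).1 = A at *
      rw [h1]
      field_simp
      ring
    · generalize cos (w t).2 = B at *
      rw [h2]
      field_simp
  · simpa using hd.hasFDerivAt.fst.hasDerivAt.deriv
  · rw [hd.hasFDerivAt.snd.hasDerivAt.deriv]
    simp only [ContinuousLinearMap.comp_apply, ContinuousLinearMap.toSpanSingleton_apply,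
      one_smul, ContinuousLinearMap.coe_snd', cos_zero]
    field_simp
    ring
end
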